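/- arXiv:1406.0168 — 2 statements merged into one kernel-verified Lean document; each statement's English description precedes it below -/
import Mathlib

section
/- There exist absolute constants C > 0 and k ≥ 0 with the following property. Let t > 0, x ∈ ℝ², C_f > 0, and let K_g : [0,t] × ℝ² → [0,∞) be measurable such that for every a ∈ [0,t] the flux of K_g on the backward light cone with tip (a,x) is at most C_f. Then for every ε ∈ (0,1]: ∫₀ᵗ ∫_{|y−x| ≤ (1−ε)(t−s)} K_g(s,y)^{5/3} / ( (t−s) (1 − |ξ|²)^{7/6} ) dy ds ≤ C C_f^{5/6} (1+t)^k ε^{−1/6}, where ξ = (y−x)/(t−s). -/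
open MeasureTheory Set
open scoped NNReal ENNReal

/-- The unit vector `(cos θ, sin θ) ∈ ℝ²`. -/
noncomputable def unitVec (θ : ℝ) : EuclideanSpace ℝ (Fin 2) :=
  (EuclideanSpace.equiv (Fin 2) ℝ).symm ![Real.cos θ, Real.sin θ]

/-- The flux `∫₀^a ∫₀^{2π} (a−s) K_g(s, x + (a−s)ω(θ))² dθ ds` of `K_g` on the backward
light cone with tip `(a, x)`. -/
noncomputable def coneFlux (Kg : ℝ → EuclideanSpace ℝ (Fin 2) → ℝ) (a : ℝ)
    (x : EuclideanSpace ℝ (Fin 2)) : ℝ≥0∞ :=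
  ∫⁻ s in Ioc (0 : ℝ) a, ∫⁻ θ in Ioc (0 : ℝ) (2 * Real.pi),
    ENNReal.ofReal ((a - s) * Kg s (x + (a - s) • unitVec θ) ^ 2)

/-!
The truncated solid cone `|y - x| ≤ (1 - ε) (t - s)` is foliated by the light cones with tips
`(a, x)`, `0 < a < t`: in polar coordinates `y = x + (a - s) ω(θ)`. On a single leaf
`t - a = (t - s) - |y - x|` is constant, and `1 - |ξ|² ≥ (t - a) / (t - s)`, so for every
`q ∈ (0, 1]` (the theorem being the case `q = 1/6`)
`(a - s) K_g^{2 (1 - q)} / ((t - s) (1 - |ξ|²)^{1 + q})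
  ≤ (t - a)^{-(1 + q)} ((a - s) K_g²)^{1 - q} ((a - s) (t - s))^q`.
Hölder's inequality on the leaf separates the flux from the integral of `(a - s) (t - s)`. The
leaf meets the solid cone only where `t - s ≤ M := min t ((t - a) / ε)`, so the latter is at most
`2π M³`, and it remains to integrate `(t - a)^{-(1 + q)} M^{3 q}` over `a`.
-/

lemma norm_unitVec (θ : ℝ) : ‖unitVec θ‖ = 1 := by
  simp [unitVec, EuclideanSpace.norm_eq]

lemma unitVec_periodic : Function.Periodic unitVec (2 * Real.pi) := fun θ ↦ by
  simp [unitVec]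

@[fun_prop]
lemma continuous_unitVec : Continuous unitVec :=
  (EuclideanSpace.equiv (Fin 2) ℝ).symm.continuous.comp <|
    continuous_pi <| Fin.forall_fin_two.2 ⟨Real.continuous_cos, Real.continuous_sin⟩

lemma dist_add_smul_unitVec (x : EuclideanSpace ℝ (Fin 2)) (r θ : ℝ) :
    dist (x + r • unitVec θ) x = |r| := by
  simp [dist_eq_norm, norm_smul, norm_unitVec]

lemma setLIntegral_Ioc_eq_of_periodic {g : ℝ → ℝ≥0∞} {T : ℝ} (hT : 0 < T)
    (hg : Function.Periodic g T) (a b : ℝ) :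
    ∫⁻ θ in Ioc a (a + T), g θ = ∫⁻ θ in Ioc b (b + T), g θ :=
  (isAddFundamentalDomain_Ioc hT a).setLIntegral_eq (isAddFundamentalDomain_Ioc hT b) g
    hg.map_vadd_zmultiples

lemma lintegral_euclideanSpace_fin_two (f : EuclideanSpace ℝ (Fin 2) → ℝ≥0∞) :
    ∫⁻ y, f y = ∫⁻ p : ℝ × ℝ, f !₂[p.1, p.2] := by
  have volume_preserving : MeasurePreserving
      (MeasurableEquiv.finTwoArrow.symm.trans (MeasurableEquiv.toLp 2 (Fin 2 → ℝ))) :=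
    (PiLp.volume_preserving_toLp (Fin 2)).comp (volume_preserving_finTwoArrow ℝ).symm
  exact (volume_preserving.lintegral_comp_emb (MeasurableEquiv.measurableEmbedding _) f).symm

lemma lintegral_eq_lintegral_polar {f : EuclideanSpace ℝ (Fin 2) → ℝ≥0∞} (hf : Measurable f)
    (x : EuclideanSpace ℝ (Fin 2)) :
    ∫⁻ y, f y = ∫⁻ r in Ioi (0 : ℝ), ∫⁻ θ in Ioc 0 (2 * Real.pi),
      ENNReal.ofReal r * f (x + r • unitVec θ) := by
  have polarCoord_symm_eq (p : ℝ × ℝ) :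
      !₂[(polarCoord.symm p).1, (polarCoord.symm p).2] = p.1 • unitVec p.2 := by
    ext i
    fin_cases i <;> simp [unitVec]
  have measurable_polar : Measurable fun p : ℝ × ℝ ↦
      ENNReal.ofReal p.1 * f (x + p.1 • unitVec p.2) :=
    (by fun_prop : Measurable fun p : ℝ × ℝ ↦ ENNReal.ofReal p.1).mul
      (hf.comp (Continuous.measurable (by fun_prop)))
  calc ∫⁻ y, f y
      = ∫⁻ p in polarCoord.target, ENNReal.ofReal p.1 * f (x + p.1 • unitVec p.2) := by
        simp_rw [← lintegral_add_left_eq_self f x, lintegral_euclideanSpace_fin_two,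
          ← lintegral_comp_polarCoord_symm, polarCoord_symm_eq, smul_eq_mul]
    _ = ∫⁻ r in Ioi (0 : ℝ), ∫⁻ θ in Ioo (-Real.pi) Real.pi,
          ENNReal.ofReal r * f (x + r • unitVec θ) := by
        rw [polarCoord_target, Measure.volume_eq_prod, ← Measure.prod_restrict,
          lintegral_prod _ measurable_polar.aemeasurable]
    _ = _ := by
        refine lintegral_congr fun r ↦ ?_
        have periodic : Function.Periodic
            (fun θ ↦ ENNReal.ofReal r * f (x + r • unitVec θ)) (2 * Real.pi) := fun θ ↦ by
          simp only [unitVec_periodic θ]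
        convert setLIntegral_Ioc_eq_of_periodic Real.two_pi_pos periodic (-Real.pi) 0 using 1
        · rw [restrict_Ioo_eq_restrict_Ioc]
          ring_nf
        · rw [zero_add]

lemma setLIntegral_closedBall_eq_lintegral_polar {f : EuclideanSpace ℝ (Fin 2) → ℝ≥0∞}
    (hf : Measurable f) (x : EuclideanSpace ℝ (Fin 2)) (ρ : ℝ) :
    ∫⁻ y in Metric.closedBall x ρ, f y = ∫⁻ r in Ioc 0 ρ, ∫⁻ θ in Ioc 0 (2 * Real.pi),
      ENNReal.ofReal r * f (x + r • unitVec θ) := by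
  have hball : MeasurableSet (Metric.closedBall x ρ) := measurableSet_closedBall
  rw [← lintegral_indicator hball, lintegral_eq_lintegral_polar (hf.indicator hball) x,
    ← Ioi_inter_Iic (a := (0 : ℝ)) (b := ρ), inter_comm (Ioi 0) (Iic ρ),
    ← setLIntegral_indicator measurableSet_Iic]
  refine setLIntegral_congr_fun measurableSet_Ioi fun r (hr : 0 < r) ↦ ?_
  have mem_ball_iff (θ : ℝ) : x + r • unitVec θ ∈ Metric.closedBall x ρ ↔ r ∈ Iic ρ := by
    rw [Metric.mem_closedBall, dist_add_smul_unitVec, abs_of_pos hr, mem_Iic]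
  by_cases hρ : r ∈ Iic ρ <;> simp [indicator, mem_ball_iff, hρ]

lemma setLIntegral_closedBall_eq_lintegral_shifted_polar
    {f : EuclideanSpace ℝ (Fin 2) → ℝ≥0∞} (hf : Measurable f)
    (x : EuclideanSpace ℝ (Fin 2)) (s ρ : ℝ) :
    ∫⁻ y in Metric.closedBall x ρ, f y = ∫⁻ a in Ioc s (s + ρ), ∫⁻ θ in Ioc 0 (2 * Real.pi),
      ENNReal.ofReal (a - s) * f (x + (a - s) • unitVec θ) := by
  have preimage_eq : (· - s) ⁻¹' Ioc 0 ρ = Ioc s (s + ρ) := by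
    rw [preimage_sub_const_Ioc, zero_add, add_comm]
  rw [← preimage_eq, (measurePreserving_sub_right volume s).setLIntegral_comp_preimage_emb
    (measurableEmbedding_subRight s) (fun r ↦ ∫⁻ θ in Ioc 0 (2 * Real.pi),
      ENNReal.ofReal r * f (x + r • unitVec θ))]
  exact setLIntegral_closedBall_eq_lintegral_polar hf x ρ

section IteratedIntegrals

variable {α β : Type*} [MeasurableSpace α] [MeasurableSpace β] {μ : Measure α} {ν : Measure β}

lemma setLIntegral_setLIntegral_eq_lintegral_indicator {S : Set α} {A : α → Set β}
    (hS : MeasurableSet S) (hA : MeasurableSet {p : α × β | p.1 ∈ S ∧ p.2 ∈ A p.1})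
    (f : α → β → ℝ≥0∞) :
    ∫⁻ x in S, ∫⁻ y in A x, f x y ∂ν ∂μ =
      ∫⁻ x, ∫⁻ y, {p : α × β | p.1 ∈ S ∧ p.2 ∈ A p.1}.indicator f.uncurry (x, y) ∂ν ∂μ := by
  rw [← lintegral_indicator hS]
  refine lintegral_congr fun x ↦ ?_
  by_cases hx : x ∈ S
  · have hAx : MeasurableSet (A x) := by
      simpa [hx] using measurable_prodMk_left (x := x) hA
    rw [indicator_of_mem hx, ← lintegral_indicator hAx]
    refine lintegral_congr fun y ↦ ?_
    by_cases hy : y ∈ A x <;> simp [hx, hy]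
  · simp [indicator, hx]

lemma setLIntegral_setLIntegral_comm [SFinite μ] [SFinite ν] {S : Set α} {T : Set β}
    {A : α → Set β} {B : β → Set α} (hS : MeasurableSet S) (hT : MeasurableSet T)
    (hB : MeasurableSet {p : β × α | p.1 ∈ T ∧ p.2 ∈ B p.1})
    (h : ∀ x y, x ∈ S ∧ y ∈ A x ↔ y ∈ T ∧ x ∈ B y)
    {f : α → β → ℝ≥0∞} (hf : Measurable f.uncurry) :
    ∫⁻ x in S, ∫⁻ y in A x, f x y ∂ν ∂μ = ∫⁻ y in T, ∫⁻ x in B y, f x y ∂μ ∂ν := by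
  have hA : MeasurableSet {p : α × β | p.1 ∈ S ∧ p.2 ∈ A p.1} := by
    simpa only [h] using! measurable_swap hB
  rw [setLIntegral_setLIntegral_eq_lintegral_indicator hS hA,
    setLIntegral_setLIntegral_eq_lintegral_indicator hT hB (fun y x ↦ f x y),
    lintegral_lintegral_swap
      (f := fun x y ↦ {p : α × β | p.1 ∈ S ∧ p.2 ∈ A p.1}.indicator f.uncurry (x, y))
      (hf.indicator hA).aemeasurable]
  refine lintegral_congr fun y ↦ lintegral_congr fun x ↦ ?_
  by_cases hxy : y ∈ T ∧ x ∈ B y <;> simp [h, hxy]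

lemma lintegral_lintegral_mul_rpow_le [SFinite ν] {f g : α → β → ℝ≥0∞}
    (hf : Measurable f.uncurry) (hg : Measurable g.uncurry)
    {p q : ℝ} (hp : 0 ≤ p) (hq : 0 ≤ q) (hpq : p + q = 1) :
    ∫⁻ x, ∫⁻ y, f x y ^ p * g x y ^ q ∂ν ∂μ ≤
      (∫⁻ x, ∫⁻ y, f x y ∂ν ∂μ) ^ p * (∫⁻ x, ∫⁻ y, g x y ∂ν ∂μ) ^ q := by
  rw [lintegral_lintegral ((hf.pow_const p).mul (hg.pow_const q)).aemeasurable,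
    lintegral_lintegral hf.aemeasurable, lintegral_lintegral hg.aemeasurable]
  exact ENNReal.lintegral_mul_norm_pow_le hf.aemeasurable hg.aemeasurable hp hq hpq

end IteratedIntegrals

lemma setLIntegral_Ioc_rpow {r c : ℝ} (hr : -1 < r) (hc : 0 ≤ c) :
    ∫⁻ τ in Ioc 0 c, ENNReal.ofReal (τ ^ r) = ENNReal.ofReal (c ^ (r + 1) / (r + 1)) := by
  have integrable : IntegrableOn (fun τ : ℝ ↦ τ ^ r) (Ioc 0 c) :=
    (intervalIntegrable_iff_integrableOn_Ioc_of_le hc).1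
      (intervalIntegral.intervalIntegrable_rpow' hr)
  rw [← ofReal_integral_eq_lintegral_ofReal integrable, ← intervalIntegral.integral_of_le hc,
    integral_rpow (Or.inl hr), Real.zero_rpow (by linarith), sub_zero]
  filter_upwards [ae_restrict_mem measurableSet_Ioc] with τ hτ
  exact Real.rpow_nonneg hτ.1.le _

lemma setLIntegral_Ioi_rpow {r c : ℝ} (hr : r < -1) (hc : 0 < c) :
    ∫⁻ τ in Ioi c, ENNReal.ofReal (τ ^ r) = ENNReal.ofReal (-c ^ (r + 1) / (r + 1)) := by
  rw [← ofReal_integral_eq_lintegral_ofReal (integrableOn_Ioi_rpow_of_lt hr hc),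
    integral_Ioi_rpow_of_lt hr hc]
  filter_upwards [ae_restrict_mem measurableSet_Ioi] with τ hτ
  exact Real.rpow_nonneg (hc.trans hτ).le _

lemma setLIntegral_Ioc_rpow_mul_min_rpow {t ε q r : ℝ} (ht : 0 < t) (hε : 0 < ε) (hqr : q < r) :
    ∫⁻ τ in Ioc 0 (ε * t), ENNReal.ofReal (τ ^ (-(1 + q)) * min t (τ / ε) ^ r) =
      ENNReal.ofReal (1 / (r - q) * (t ^ (r - q) * ε ^ (-q))) := calc
  _ = ∫⁻ τ in Ioc 0 (ε * t), ENNReal.ofReal (ε ^ (-r)) * ENNReal.ofReal (τ ^ (r - q - 1)) := by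
      refine setLIntegral_congr_fun measurableSet_Ioc fun τ hτ ↦ ?_
      rw [min_eq_right ((div_le_iff₀' hε).2 hτ.2), ← ENNReal.ofReal_mul (by positivity),
        Real.div_rpow hτ.1.le hε.le, Real.rpow_neg hε.le,
        show r - q - 1 = -(1 + q) + r by ring, Real.rpow_add hτ.1]
      congr 1
      ring
  _ = ENNReal.ofReal (1 / (r - q) * (t ^ (r - q) * ε ^ (-q))) := by
      rw [lintegral_const_mul' _ _ ENNReal.ofReal_ne_top,
        setLIntegral_Ioc_rpow (by linarith) (by positivity), ← ENNReal.ofReal_mul (by positivity),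
        sub_add_cancel, Real.mul_rpow hε.le ht.le, show -q = -r + (r - q) by ring,
        Real.rpow_add hε]
      congr 1
      ring

lemma setLIntegral_Ioi_rpow_mul_min_rpow {t ε q : ℝ} (ht : 0 < t) (hε : 0 < ε) (hq : 0 < q)
    (r : ℝ) :
    ∫⁻ τ in Ioi (ε * t), ENNReal.ofReal (τ ^ (-(1 + q)) * min t (τ / ε) ^ r) =
      ENNReal.ofReal (1 / q * (t ^ (r - q) * ε ^ (-q))) := calc
  _ = ∫⁻ τ in Ioi (ε * t), ENNReal.ofReal (t ^ r) * ENNReal.ofReal (τ ^ (-(1 + q))) := by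
      refine setLIntegral_congr_fun measurableSet_Ioi fun τ hτ ↦ ?_
      rw [min_eq_left ((le_div_iff₀' hε).2 (mem_Ioi.1 hτ).le),
        ← ENNReal.ofReal_mul (by positivity), mul_comm]
  _ = ENNReal.ofReal (1 / q * (t ^ (r - q) * ε ^ (-q))) := by
      rw [lintegral_const_mul' _ _ ENNReal.ofReal_ne_top,
        setLIntegral_Ioi_rpow (by linarith) (by positivity), ← ENNReal.ofReal_mul (by positivity),
        show -(1 + q) + 1 = -q by ring, neg_div_neg_eq, Real.mul_rpow hε.le ht.le,
        sub_eq_add_neg r, Real.rpow_add ht]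
      congr 1
      ring

lemma lintegral_Ioi_rpow_mul_min_rpow {t ε q r : ℝ} (ht : 0 < t) (hε : 0 < ε) (hq : 0 < q)
    (hqr : q < r) :
    ∫⁻ τ in Ioi 0, ENNReal.ofReal (τ ^ (-(1 + q)) * min t (τ / ε) ^ r) =
      ENNReal.ofReal ((1 / (r - q) + 1 / q) * (t ^ (r - q) * ε ^ (-q))) := by
  have hrq : 0 ≤ 1 / (r - q) := one_div_nonneg.2 (sub_nonneg.2 hqr.le)
  have hεt : 0 ≤ ε * t := by positivity
  rw [← Ioc_union_Ioi_eq_Ioi hεt, lintegral_union measurableSet_Ioi Ioc_disjoint_Ioi_same,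
    setLIntegral_Ioc_rpow_mul_min_rpow ht hε hqr, setLIntegral_Ioi_rpow_mul_min_rpow ht hε hq,
    add_mul, ENNReal.ofReal_add (mul_nonneg hrq (by positivity)) (by positivity)]

lemma integrand_le_flux_rpow_mul_weight_rpow {k r T q : ℝ} (hk : 0 ≤ k) (hr : 0 < r) (hrT : r < T)
    (hq : 0 ≤ q) :
    r * (k ^ (2 * (1 - q)) / (T * (1 - (r / T) ^ 2) ^ (1 + q))) ≤
      (T - r) ^ (-(1 + q)) * ((r * k ^ 2) ^ (1 - q) * (r * T) ^ q) := by
  have hT : 0 < T := hr.trans hrT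
  have hTr : 0 < T - r := sub_pos.2 hrT
  have one_sub_sq_ge : (T - r) / T ≤ 1 - (r / T) ^ 2 := by
    have : r / T < 1 := (div_lt_one hT).2 hrT
    have : 0 < r / T := by positivity
    rw [sub_div, div_self hT.ne']
    nlinarith
  have hk_rpow : k ^ (2 * (1 - q)) = (k ^ 2) ^ (1 - q) := by
    rw [Real.rpow_mul hk, Real.rpow_two]
  have hr_split : r = r ^ (1 - q) * r ^ q := by
    rw [← Real.rpow_add hr, sub_add_cancel, Real.rpow_one]
  calc r * (k ^ (2 * (1 - q)) / (T * (1 - (r / T) ^ 2) ^ (1 + q)))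
      ≤ r * (k ^ (2 * (1 - q)) / (T * ((T - r) / T) ^ (1 + q))) := by gcongr
    _ = (T - r) ^ (-(1 + q)) * ((r ^ (1 - q) * r ^ q) * (k ^ 2) ^ (1 - q) * T ^ q) := by
      rw [← hr_split, hk_rpow, Real.div_rpow hTr.le hT.le, Real.rpow_neg hTr.le,
        Real.rpow_one_add' hT.le (by linarith)]
      field_simp
    _ = (T - r) ^ (-(1 + q)) * ((r * k ^ 2) ^ (1 - q) * (r * T) ^ q) := by
      rw [Real.mul_rpow hr.le (by positivity), Real.mul_rpow hr.le hT.le]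
      ring

/-- The times `s > 0` at which the backward light cone with tip `(a, x)` lies in the truncated
solid cone `|y - x| ≤ (1 - ε) (t - s)`. On the light cone `|y - x| = a - s`, and
`a - s ≤ (1 - ε) (t - s)` is encoded as `ε (t - s) ≤ t - a`. -/
def coneSlice (t ε a : ℝ) : Set ℝ :=
  {s | 0 < s ∧ s < a ∧ ε * (t - s) ≤ t - a}

lemma measurableSet_setOf_mem_coneSlice (t ε : ℝ) :
    MeasurableSet {p : ℝ × ℝ | p.1 ∈ Ioo 0 t ∧ p.2 ∈ coneSlice t ε p.1} := by
  unfold coneSlice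
  measurability

lemma measurableSet_coneSlice (t ε a : ℝ) : MeasurableSet (coneSlice t ε a) := by
  unfold coneSlice
  measurability

lemma coneSlice_subset_Icc {t ε a : ℝ} (hε : 0 < ε) (ha : a ≤ t) :
    coneSlice t ε a ⊆ Icc (t - min t ((t - a) / ε)) t := by
  rintro s ⟨hs, hsa, hslice⟩
  have : t - s ≤ min t ((t - a) / ε) :=
    le_min (by linarith) ((le_div_iff₀' hε).2 hslice)
  exact ⟨by linarith, by linarith⟩

lemma setLIntegral_coneSlice_mul_le {t ε a : ℝ} (hε : 0 < ε) (ha : a ≤ t) :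
    ∫⁻ s in coneSlice t ε a, ENNReal.ofReal ((a - s) * (t - s)) ≤
      ENNReal.ofReal (min t ((t - a) / ε) ^ 3) := by
  set M := min t ((t - a) / ε)
  have subset_Icc : coneSlice t ε a ⊆ Icc (t - M) t := coneSlice_subset_Icc hε ha
  calc ∫⁻ s in coneSlice t ε a, ENNReal.ofReal ((a - s) * (t - s))
      ≤ ∫⁻ _ in coneSlice t ε a, ENNReal.ofReal (M ^ 2) := by
        refine setLIntegral_mono' (measurableSet_coneSlice t ε a) fun s hs ↦ ?_
        have hsM : t - s ≤ M := by linarith [(subset_Icc hs).1]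
        have hsa : s < a := hs.2.1
        gcongr
        nlinarith
    _ ≤ ENNReal.ofReal (M ^ 2) * volume (Icc (t - M) t) := by
        rw [setLIntegral_const]
        gcongr
    _ = ENNReal.ofReal (M ^ 3) := by
        rw [Real.volume_Icc, ← ENNReal.ofReal_mul (by positivity)]
        ring_nf

lemma lintegral_truncatedCone_eq_lintegral_coneSlice
    {f : ℝ → EuclideanSpace ℝ (Fin 2) → ℝ≥0∞} (hf : Measurable f.uncurry)
    (x : EuclideanSpace ℝ (Fin 2)) {t ε : ℝ} (hε : 0 < ε) :
    ∫⁻ s in Ioc 0 t, ∫⁻ y in {y | dist y x ≤ (1 - ε) * (t - s)}, f s y =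
      ∫⁻ a in Ioo 0 t, ∫⁻ s in coneSlice t ε a, ∫⁻ θ in Ioc 0 (2 * Real.pi),
        ENNReal.ofReal (a - s) * f s (x + (a - s) • unitVec θ) := by
  have polar (s : ℝ) : ∫⁻ y in {y | dist y x ≤ (1 - ε) * (t - s)}, f s y =
      ∫⁻ a in Ioc s (s + (1 - ε) * (t - s)), ∫⁻ θ in Ioc 0 (2 * Real.pi),
        ENNReal.ofReal (a - s) * f s (x + (a - s) • unitVec θ) :=
    setLIntegral_closedBall_eq_lintegral_shifted_polar (hf.comp measurable_prodMk_left) x s _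
  have mem_iff (s a : ℝ) : s ∈ Ioo 0 t ∧ a ∈ Ioc s (s + (1 - ε) * (t - s)) ↔
      a ∈ Ioo 0 t ∧ s ∈ coneSlice t ε a := by
    constructor
    · rintro ⟨⟨hs, hst⟩, hsa, ha⟩
      exact ⟨⟨hs.trans hsa, by nlinarith⟩, hs, hsa, by linarith⟩
    · rintro ⟨⟨-, hat⟩, hs, hsa, hslice⟩
      exact ⟨⟨hs, hsa.trans hat⟩, hsa, by linarith⟩
  have measurable_integrand : Measurable (Function.uncurry fun s a : ℝ ↦
      ∫⁻ θ in Ioc 0 (2 * Real.pi), ENNReal.ofReal (a - s) * f s (x + (a - s) • unitVec θ)) := by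
    have measurable_point : Measurable fun p : (ℝ × ℝ) × ℝ ↦
        (p.1.1, x + (p.1.2 - p.1.1) • unitVec p.2) := Continuous.measurable (by fun_prop)
    exact Measurable.lintegral_prod_right'
      (f := fun p : (ℝ × ℝ) × ℝ ↦
        ENNReal.ofReal (p.1.2 - p.1.1) * f p.1.1 (x + (p.1.2 - p.1.1) • unitVec p.2))
      (Measurable.mul (by fun_prop) (hf.comp measurable_point))
  rw [← restrict_Ioo_eq_restrict_Ioc (b := t)]
  simp_rw [polar]
  exact setLIntegral_setLIntegral_comm measurableSet_Ioo measurableSet_Ioo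
    (measurableSet_setOf_mem_coneSlice t ε) mem_iff measurable_integrand

section FluxEstimate

variable {Kg : ℝ → EuclideanSpace ℝ (Fin 2) → ℝ} {t ε q : ℝ}

lemma lintegral_coneSlice_flux_mul_weight_le (hK : Measurable (Function.uncurry Kg))
    (x : EuclideanSpace ℝ (Fin 2)) {a : ℝ} (ht : 0 ≤ t) (hε : 0 < ε) (ha : a ≤ t) (hq : 0 ≤ q)
    (hq1 : q ≤ 1) :
    ∫⁻ s in coneSlice t ε a, ∫⁻ θ in Ioc 0 (2 * Real.pi),
      ENNReal.ofReal ((a - s) * Kg s (x + (a - s) • unitVec θ) ^ 2) ^ (1 - q) *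
        ENNReal.ofReal ((a - s) * (t - s)) ^ q ≤
      coneFlux Kg a x ^ (1 - q) *
        ENNReal.ofReal ((2 * Real.pi) ^ q * min t ((t - a) / ε) ^ (3 * q)) := by
  set M := min t ((t - a) / ε)
  have hM : 0 ≤ M := le_min ht (div_nonneg (sub_nonneg.2 ha) hε.le)
  have measurable_flux : Measurable (Function.uncurry fun s θ : ℝ ↦
      ENNReal.ofReal ((a - s) * Kg s (x + (a - s) • unitVec θ) ^ 2)) := by
    have : Measurable fun p : ℝ × ℝ ↦ Kg p.1 (x + (a - p.1) • unitVec p.2) :=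
      hK.comp (g := Function.uncurry Kg) (f := fun p : ℝ × ℝ ↦ (p.1, x + (a - p.1) • unitVec p.2))
        (Continuous.measurable (by fun_prop))
    simp only [Function.uncurry_def]
    fun_prop
  have measurable_weight : Measurable (Function.uncurry fun s (_ : ℝ) ↦
      ENNReal.ofReal ((a - s) * (t - s))) := by
    simp only [Function.uncurry_def]
    fun_prop
  have flux_le : ∫⁻ s in coneSlice t ε a, ∫⁻ θ in Ioc 0 (2 * Real.pi),
      ENNReal.ofReal ((a - s) * Kg s (x + (a - s) • unitVec θ) ^ 2) ≤ coneFlux Kg a x :=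
    lintegral_mono_set fun s hs ↦ ⟨hs.1, hs.2.1.le⟩
  have weight_le : ∫⁻ s in coneSlice t ε a, ∫⁻ _ in Ioc 0 (2 * Real.pi),
      ENNReal.ofReal ((a - s) * (t - s)) ≤ ENNReal.ofReal (2 * Real.pi * M ^ 3) := by
    simp_rw [setLIntegral_const, Real.volume_Ioc, sub_zero]
    rw [lintegral_mul_const' _ _ ENNReal.ofReal_ne_top, mul_comm (2 * Real.pi) (M ^ 3),
      ENNReal.ofReal_mul (p := M ^ 3) (by positivity)]
    gcongr
    exact setLIntegral_coneSlice_mul_le hε ha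
  calc _ ≤ _ := lintegral_lintegral_mul_rpow_le measurable_flux measurable_weight
        (sub_nonneg.2 hq1) hq (sub_add_cancel 1 q)
    _ ≤ coneFlux Kg a x ^ (1 - q) * ENNReal.ofReal (2 * Real.pi * M ^ 3) ^ q := by
        have : 0 ≤ 1 - q := sub_nonneg.2 hq1
        gcongr
    _ = coneFlux Kg a x ^ (1 - q) * ENNReal.ofReal ((2 * Real.pi) ^ q * M ^ (3 * q)) := by
        rw [ENNReal.ofReal_rpow_of_nonneg (by positivity) hq,
          Real.mul_rpow (by positivity) (by positivity), Real.rpow_mul hM]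
        norm_cast

lemma lintegral_coneSlice_integrand_le (hK : Measurable (Function.uncurry Kg))
    (hK0 : ∀ s y, 0 ≤ Kg s y) (x : EuclideanSpace ℝ (Fin 2)) {a : ℝ} (hε : 0 < ε)
    (ha : a ∈ Ioo 0 t) (hq : 0 ≤ q) (hq1 : q ≤ 1) :
    ∫⁻ s in coneSlice t ε a, ∫⁻ θ in Ioc 0 (2 * Real.pi), ENNReal.ofReal (a - s) *
      ENNReal.ofReal (Kg s (x + (a - s) • unitVec θ) ^ (2 * (1 - q)) / ((t - s) *
        (1 - (dist (x + (a - s) • unitVec θ) x / (t - s)) ^ 2) ^ (1 + q))) ≤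
      coneFlux Kg a x ^ (1 - q) * ENNReal.ofReal ((2 * Real.pi) ^ q) *
        ENNReal.ofReal ((t - a) ^ (-(1 + q)) * min t ((t - a) / ε) ^ (3 * q)) := by
  have hta : 0 < t - a := sub_pos.2 ha.2
  calc _ ≤ ∫⁻ s in coneSlice t ε a, ∫⁻ θ in Ioc 0 (2 * Real.pi),
        ENNReal.ofReal ((t - a) ^ (-(1 + q))) *
          (ENNReal.ofReal ((a - s) * Kg s (x + (a - s) • unitVec θ) ^ 2) ^ (1 - q) *
            ENNReal.ofReal ((a - s) * (t - s)) ^ q) := by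
        refine setLIntegral_mono' (measurableSet_coneSlice t ε a) fun s hs ↦
          lintegral_mono fun θ ↦ ?_
        have hsa : 0 < a - s := sub_pos.2 hs.2.1
        have hst : 0 < t - s := by linarith
        have integrand_le := integrand_le_flux_rpow_mul_weight_rpow
          (hK0 s (x + (a - s) • unitVec θ)) hsa (sub_lt_sub_right ha.2 s) hq
        rw [sub_sub_sub_cancel_right] at integrand_le
        rw [dist_add_smul_unitVec, abs_of_pos hsa, ← ENNReal.ofReal_mul hsa.le,
          ENNReal.ofReal_rpow_of_nonneg (by positivity) (sub_nonneg.2 hq1),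
          ENNReal.ofReal_rpow_of_nonneg (by positivity) hq, ← ENNReal.ofReal_mul (by positivity),
          ← ENNReal.ofReal_mul (by positivity)]
        exact ENNReal.ofReal_le_ofReal integrand_le
    _ ≤ ENNReal.ofReal ((t - a) ^ (-(1 + q))) * (coneFlux Kg a x ^ (1 - q) *
          ENNReal.ofReal ((2 * Real.pi) ^ q * min t ((t - a) / ε) ^ (3 * q))) := by
        simp_rw [lintegral_const_mul' _ _ ENNReal.ofReal_ne_top]
        gcongr
        exact lintegral_coneSlice_flux_mul_weight_le hK x (ha.1.trans ha.2).le hε ha.2.le hq hq1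
    _ = _ := by
        rw [ENNReal.ofReal_mul (by positivity), ENNReal.ofReal_mul (by positivity)]
        ring

theorem interior_flux_estimate_general (hK : Measurable (Function.uncurry Kg))
    (hK0 : ∀ s y, 0 ≤ Kg s y) {x : EuclideanSpace ℝ (Fin 2)} (ht : 0 < t) (hε : 0 < ε)
    (hq : 0 < q) (hq1 : q ≤ 1) {B : ℝ≥0∞} (hflux : ∀ a ∈ Ioo 0 t, coneFlux Kg a x ≤ B) :
    ∫⁻ s in Ioc 0 t, ∫⁻ y in {y | dist y x ≤ (1 - ε) * (t - s)},
      ENNReal.ofReal (Kg s y ^ (2 * (1 - q)) /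
        ((t - s) * (1 - (dist y x / (t - s)) ^ 2) ^ (1 + q))) ≤
      ENNReal.ofReal (3 / (2 * q) * (2 * Real.pi) ^ q) * B ^ (1 - q) *
        ENNReal.ofReal t ^ (2 * q) * ENNReal.ofReal ε ^ (-q) := by
  set radial : ℝ → ℝ≥0∞ :=
    fun τ ↦ ENNReal.ofReal (τ ^ (-(1 + q)) * min t (τ / ε) ^ (3 * q))
  have measurable_integrand : Measurable (Function.uncurry fun s y ↦
      ENNReal.ofReal (Kg s y ^ (2 * (1 - q)) /
        ((t - s) * (1 - (dist y x / (t - s)) ^ 2) ^ (1 + q)))) :=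
    ((hK.pow_const _).div (by fun_prop)).ennreal_ofReal
  calc _ = _ := lintegral_truncatedCone_eq_lintegral_coneSlice measurable_integrand x hε
    _ ≤ ∫⁻ a in Ioo 0 t, B ^ (1 - q) * ENNReal.ofReal ((2 * Real.pi) ^ q) * radial (t - a) := by
        refine setLIntegral_mono' measurableSet_Ioo fun a ha ↦
          (lintegral_coneSlice_integrand_le hK hK0 x hε ha hq.le hq1).trans ?_
        have : 0 ≤ 1 - q := sub_nonneg.2 hq1
        gcongr
        exact hflux a ha
    _ = B ^ (1 - q) * ENNReal.ofReal ((2 * Real.pi) ^ q) * ∫⁻ τ in Ioo 0 t, radial τ := by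
        have measurable_radial : Measurable fun a ↦ radial (t - a) := by fun_prop
        rw [lintegral_const_mul _ measurable_radial]
        have preimage_eq : (t - ·) ⁻¹' Ioo 0 t = Ioo 0 t := by simp
        nth_rw 1 [← preimage_eq]
        rw [(Measure.measurePreserving_sub_left volume t).setLIntegral_comp_preimage_emb
          (MeasurableEquiv.subLeft t).measurableEmbedding]
    _ ≤ B ^ (1 - q) * ENNReal.ofReal ((2 * Real.pi) ^ q) * ∫⁻ τ in Ioi 0, radial τ := by
        gcongr
        exact Ioo_subset_Ioi_self
    _ = _ := by
        rw [lintegral_Ioi_rpow_mul_min_rpow ht hε hq (by linarith),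
          show 1 / (3 * q - q) + 1 / q = 3 / (2 * q) by field_simp; norm_num,
          show 3 * q - q = 2 * q by ring, ENNReal.ofReal_rpow_of_pos ht,
          ENNReal.ofReal_rpow_of_pos hε, ENNReal.ofReal_mul (by positivity),
          ENNReal.ofReal_mul (by positivity), ENNReal.ofReal_mul (by positivity)]
        ring

end FluxEstimate

/-- **Interior flux estimate** (the bound for the integral (5.11) in the proof of
Proposition 5.4).  There are absolute constants `C > 0` and `k ≥ 0` such that if the
flux of `K_g` on every backward cone with tip `(a,x)`, `a ∈ [0,t]`, is at most `C_f`,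
then for every `ε ∈ (0,1]`, with `ξ = (y−x)/(t−s)`,
`∫₀ᵗ∫_{|y−x|≤(1−ε)(t−s)} K_g^{5/3}/((t−s)(1−|ξ|²)^{7/6}) dy ds
  ≤ C C_f^{5/6} (1+t)^k ε^{−1/6}`. -/
theorem interior_flux_estimate :
    ∃ C : ℝ≥0, 0 < C ∧ ∃ k : ℝ, 0 ≤ k ∧
      ∀ (t : ℝ), 0 < t → ∀ (x : EuclideanSpace ℝ (Fin 2)) (Cf : ℝ), 0 < Cf →
      ∀ (Kg : ℝ → EuclideanSpace ℝ (Fin 2) → ℝ),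
        Measurable (Function.uncurry Kg) → (∀ s y, 0 ≤ Kg s y) →
        (∀ a, 0 ≤ a → a ≤ t → coneFlux Kg a x ≤ ENNReal.ofReal Cf) →
        ∀ ε : ℝ, 0 < ε → ε ≤ 1 →
          (∫⁻ s in Ioc (0 : ℝ) t, ∫⁻ y in {y | dist y x ≤ (1 - ε) * (t - s)},
              ENNReal.ofReal (Kg s y ^ ((5 : ℝ) / 3) /
                ((t - s) * (1 - (dist y x / (t - s)) ^ 2) ^ ((7 : ℝ) / 6))))
            ≤ C * ENNReal.ofReal Cf ^ ((5 : ℝ) / 6) * ENNReal.ofReal (1 + t) ^ k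
              * ENNReal.ofReal ε ^ (-(1 / 6) : ℝ) := by
  refine ⟨(9 * (2 * Real.pi) ^ (1 / 6 : ℝ)).toNNReal, Real.toNNReal_pos.2 (by positivity),
    1 / 3, by norm_num, fun t ht x Cf _ Kg hK hK0 hflux ε hε _ ↦ ?_⟩
  have estimate := interior_flux_estimate_general hK hK0 ht hε (q := 1 / 6) (by norm_num)
    (by norm_num) fun a ha ↦ hflux a ha.1.le ha.2.le
  rw [show 2 * (1 - 1 / 6) = (5 : ℝ) / 3 by norm_num, show 1 + 1 / 6 = (7 : ℝ) / 6 by norm_num,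
    show 3 / (2 * (1 / 6)) = (9 : ℝ) by norm_num, show 1 - 1 / 6 = (5 : ℝ) / 6 by norm_num,
    show 2 * (1 / 6) = (1 : ℝ) / 3 by norm_num] at estimate
  refine estimate.trans ?_
  rw [← ENNReal.ofReal]
  gcongr
  linarith
end

section
/- Let N > 13 be a real number and C₀, C₁ > 0. Let T > 0 and let f : [0,T) × ℝ² × ℝ² → [0,∞) be measurable with f ≤ C₀ almost everywhere and sup_{0 ≤ t < T} ∫_{ℝ²}∫_{ℝ²} p_0 f(t,x,p) dp dx ≤ C₁. Define W_T(t,x) = ∫₀ᵗ ∫_{|y−x| ≤ t−s} ∫_{ℝ²} f(s,y,p) / ( p_0 (1 + p̂·ξ) (t−s) √((t−s)² − |y−x|²) ) dp dy ds (the integral dominating the Glassey–Schaeffer term K_T in two dimensions). Then there exist q₂' ∈ [1,∞) depending only on N, and constants C > 0, k ≥ 0 depending only on N, C₀ and C₁ (not on T), such that ‖W_T‖_{L¹_t([0,T); L^{N+2}_x)}^{N+2} ≤ C (1+T)^k ‖f p_0^N‖_{L^∞_t([0,T); L¹_x L¹_p)}^{(N+2)/(5(N−1))} ‖f p_0^N‖_{L^{q₂'}_t([0,T);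 L¹_x L¹_p)}^{(4N−7)/(5(N−1))}. -/
open MeasureTheory Set
open scoped NNReal ENNReal RealInnerProductSpace

/-- `p₀ = √(1 + |p|²)` for `p ∈ ℝ²`. -/
noncomputable def pZero (p : EuclideanSpace ℝ (Fin 2)) : ℝ := Real.sqrt (1 + ‖p‖ ^ 2)

/-- `p̂ = p / p₀` for `p ∈ ℝ²`. -/
noncomputable def pHat (p : EuclideanSpace ℝ (Fin 2)) : EuclideanSpace ℝ (Fin 2) :=
  (pZero p)⁻¹ • p

/-- The integral
`W_T(t,x) = ∫₀ᵗ∫_{|y−x|≤t−s}∫ f(s,y,p)/(p₀(1+p̂·ξ)(t−s)√((t−s)²−|y−x|²)) dp dy ds`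
(with `ξ = (y−x)/(t−s)`) dominating the Glassey–Schaeffer term `K_T` in two dimensions. -/
noncomputable def WT (f : ℝ → EuclideanSpace ℝ (Fin 2) → EuclideanSpace ℝ (Fin 2) → ℝ)
    (t : ℝ) (x : EuclideanSpace ℝ (Fin 2)) : ℝ≥0∞ :=
  ∫⁻ s in Ioc (0 : ℝ) t, ∫⁻ y in {y | dist y x ≤ t - s},
    ∫⁻ p, ENNReal.ofReal (f s y p /
      (pZero p * (1 + ⟪pHat p, (t - s)⁻¹ • (y - x)⟫)
        * (t - s) * Real.sqrt ((t - s) ^ 2 - dist y x ^ 2)))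

/-- The `N`-th moment `∫∫ f(t,x,p) p₀^N dp dx` of `f` at time `t`. -/
noncomputable def momentN (f : ℝ → EuclideanSpace ℝ (Fin 2) → EuclideanSpace ℝ (Fin 2) → ℝ)
    (N : ℝ) (t : ℝ) : ℝ≥0∞ :=
  ∫⁻ x, ∫⁻ p, ENNReal.ofReal (f t x p * pZero p ^ N)

/-!
Cauchy–Schwarz in `p` splits the weight off `f`. The momentum integral of
`p₀^(-(m + 2)) (1 + p̂·ξ)⁻²` is `O((1 - |ξ|²)^(-2σ))` when `m > 3 - 4σ`, so `W_T` is controlled by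
the retarded integral of the kernel `(1 - |ξ|²)₊^(-(1/2 + σ))` against the square root of the moment
density `∫ f p₀^m dp`.

On a time slice this kernel maps `L²` to `L^c` for `c = N + 2`, as long as `σ < 2/c`. For `c = 4`
this is the `T* T` argument: the autocorrelation of `(1 - |ξ|²)₊^(-e)` is square integrable for
`e < 1`. Interpolating with the trivial `L² → L^∞` bound, valid for `e < 1/2`, gives the remaining
exponents. By scaling, a slice at distance `τ` into the past contributes `τ^(2/c - 1)`, which is
integrable, so Minkowski's inequality and Young's and Jensen's inequalities in time apply.

The choice `m = 3 - 6/c`, for which `σ` ranges over `(3/(2c), 2/c)`, makes log-convexity of the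
moments in their order, between the energy and the moment of order `c - 2 = N`, yield exactly the
first power of the latter.
-/

section LebesgueIntegral

variable {α β : Type*} [MeasurableSpace α] [MeasurableSpace β] {μ : Measure α} {ν : Measure β}

lemma ennreal_rpow_le_rpow_of_nonpos {a b : ℝ≥0∞} {z : ℝ} (hz : z ≤ 0) (hab : a ≤ b) :
    b ^ z ≤ a ^ z := by
  rw [← neg_neg z, ENNReal.rpow_neg, ENNReal.rpow_neg a]
  exact ENNReal.inv_le_inv.2 (ENNReal.rpow_le_rpow hab (neg_nonneg.2 hz))

lemma lintegral_mul_rpow_le {φ h : α → ℝ≥0∞} (hφ : AEMeasurable φ μ) (hh : AEMeasurable h μ)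
    {c : ℝ} (hc : 1 ≤ c) :
    (∫⁻ a, φ a * h a ∂μ) ^ c ≤ (∫⁻ a, φ a ∂μ) ^ (c - 1) * ∫⁻ a, φ a * h a ^ c ∂μ := by
  have hc₀ : 0 < c := by linarith
  have hc₁ : 0 ≤ 1 - 1 / c := sub_nonneg.2 ((div_le_one hc₀).2 hc)
  have h_split (a : α) : φ a * h a = φ a ^ (1 - 1 / c) * (φ a * h a ^ c) ^ (1 / c) := by
    rw [ENNReal.mul_rpow_of_nonneg _ _ (by positivity), ← mul_assoc,
      ← ENNReal.rpow_add_of_nonneg _ _ hc₁ (by positivity), ← ENNReal.rpow_mul,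
      mul_one_div_cancel hc₀.ne', sub_add_cancel, ENNReal.rpow_one, ENNReal.rpow_one]
  calc (∫⁻ a, φ a * h a ∂μ) ^ c
      ≤ ((∫⁻ a, φ a ∂μ) ^ (1 - 1 / c) * (∫⁻ a, φ a * h a ^ c ∂μ) ^ (1 / c)) ^ c := by
        simp_rw [h_split]
        gcongr
        exact ENNReal.lintegral_mul_norm_pow_le hφ (hφ.mul (hh.pow_const c)) hc₁ (by positivity)
          (by ring)
    _ = (∫⁻ a, φ a ∂μ) ^ (c - 1) * ∫⁻ a, φ a * h a ^ c ∂μ := by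
        rw [ENNReal.mul_rpow_of_nonneg _ _ hc₀.le, ← ENNReal.rpow_mul, ← ENNReal.rpow_mul,
          one_div_mul_cancel hc₀.ne', ENNReal.rpow_one, sub_mul, one_mul,
          one_div_mul_cancel hc₀.ne']

lemma lintegral_rpow_le {h : α → ℝ≥0∞} (hh : AEMeasurable h μ) {c : ℝ} (hc : 1 ≤ c) :
    (∫⁻ a, h a ∂μ) ^ c ≤ μ univ ^ (c - 1) * ∫⁻ a, h a ^ c ∂μ := by
  simpa using lintegral_mul_rpow_le (φ := 1) aemeasurable_const hh hc

lemma ae_ae_eq_mul_of_lintegral_rpow_le [SFinite μ] [SFinite ν] {F : α → β → ℝ≥0∞}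
    (hF : Measurable (Function.uncurry F)) {c : ℝ} (hc : 0 < c) {A : α → ℝ≥0∞}
    (hA : Measurable A) (hA_top : ∀ᵐ s ∂μ, A s < ∞)
    (hFA : ∀ᵐ s ∂μ, ∫⁻ x, F s x ^ c ∂ν ≤ A s ^ c) :
    ∀ᵐ x ∂ν, ∀ᵐ s ∂μ, F s x = A s * (F s x * (A s)⁻¹) := by
  refine (Measure.ae_ae_comm (p := fun s x => F s x = A s * (F s x * (A s)⁻¹))
    (measurableSet_eq_fun hF (by fun_prop))).1 ?_
  filter_upwards [hFA, hA_top] with s hs hs_top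
  have hF' : Measurable (F s) := hF.comp measurable_prodMk_left
  obtain hs₀ | hs₀ := eq_or_ne (A s) 0
  · rw [hs₀, ENNReal.zero_rpow_of_pos hc, nonpos_iff_eq_zero,
      lintegral_eq_zero_iff (hF'.pow_const c)] at hs
    filter_upwards [hs] with x hx
    simp [(ENNReal.rpow_eq_zero_iff_of_pos hc).1 hx]
  · refine ae_of_all _ fun x => ?_
    rw [mul_left_comm, ENNReal.mul_inv_cancel hs₀ hs_top.ne, mul_one]

/-- Minkowski's integral inequality, for any measurable majorant of the slice norms. -/
lemma lintegral_lintegral_rpow_le [SFinite μ] [SFinite ν] {F : α → β → ℝ≥0∞}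
    (hF : Measurable (Function.uncurry F)) {c : ℝ} (hc : 1 ≤ c) {A : α → ℝ≥0∞}
    (hA : Measurable A) (hFA : ∀ᵐ s ∂μ, ∫⁻ x, F s x ^ c ∂ν ≤ A s ^ c) :
    ∫⁻ x, (∫⁻ s, F s x ∂μ) ^ c ∂ν ≤ (∫⁻ s, A s ∂μ) ^ c := by
  have hc₀ : 0 < c := by linarith
  have hF' (s : α) : Measurable (F s) := hF.comp measurable_prodMk_left
  obtain hA_top | hA_top := eq_or_ne (∫⁻ s, A s ∂μ) ∞
  · simp [hA_top, ENNReal.top_rpow_of_pos hc₀]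
  have h_factor := ae_ae_eq_mul_of_lintegral_rpow_le hF hc₀ hA (ae_lt_top hA hA_top) hFA
  have h_slice : ∀ᵐ s ∂μ, ∫⁻ x, A s * (F s x * (A s)⁻¹) ^ c ∂ν ≤ A s := by
    filter_upwards [hFA] with s hs
    simp_rw [ENNReal.mul_rpow_of_nonneg _ _ hc₀.le]
    rw [lintegral_const_mul _ (by fun_prop), lintegral_mul_const _ ((hF' s).pow_const c)]
    calc A s * ((∫⁻ x, F s x ^ c ∂ν) * (A s)⁻¹ ^ c) ≤ A s * (A s * (A s)⁻¹) ^ c := by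
          rw [ENNReal.mul_rpow_of_nonneg _ _ hc₀.le]; gcongr
      _ ≤ A s := mul_le_of_le_one_right' (ENNReal.rpow_le_one (ENNReal.mul_inv_le_one _) hc₀.le)
  calc ∫⁻ x, (∫⁻ s, F s x ∂μ) ^ c ∂ν
      ≤ ∫⁻ x, (∫⁻ s, A s ∂μ) ^ (c - 1) * ∫⁻ s, A s * (F s x * (A s)⁻¹) ^ c ∂μ ∂ν := by
        refine lintegral_mono_ae (h_factor.mono fun x hx => ?_)
        rw [lintegral_congr_ae hx]
        exact lintegral_mul_rpow_le hA.aemeasurable (by fun_prop) hc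
    _ = (∫⁻ s, A s ∂μ) ^ (c - 1) * ∫⁻ s, ∫⁻ x, A s * (F s x * (A s)⁻¹) ^ c ∂ν ∂μ := by
        rw [lintegral_const_mul' _ _ (ENNReal.rpow_ne_top_of_nonneg (by linarith) hA_top),
          lintegral_lintegral_swap (by fun_prop)]
    _ ≤ (∫⁻ s, A s ∂μ) ^ (c - 1) * (∫⁻ s, A s ∂μ) ^ (1 : ℝ) := by
        rw [ENNReal.rpow_one]
        exact mul_le_mul_right (lintegral_mono_ae h_slice) _
    _ = (∫⁻ s, A s ∂μ) ^ c := by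
        rw [← ENNReal.rpow_add_of_nonneg _ _ (by linarith) zero_le_one, sub_add_cancel]

end LebesgueIntegral

lemma lintegral_comp_inv_smul {F : Type*} [NormedAddCommGroup F] [NormedSpace ℝ F]
    [MeasurableSpace F] [BorelSpace F] [FiniteDimensional ℝ F] (μ : Measure F)
    [μ.IsAddHaarMeasure] {r : ℝ} (hr : 0 < r) (G : F → ℝ≥0∞) :
    ∫⁻ x, G (r⁻¹ • x) ∂μ = ENNReal.ofReal r ^ Module.finrank ℝ F * ∫⁻ x, G x ∂μ := by
  have hr' : r⁻¹ ≠ 0 := inv_ne_zero hr.ne'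
  calc ∫⁻ x, G (r⁻¹ • x) ∂μ = ∫⁻ x, G x ∂(μ.map (r⁻¹ • ·)) :=
        (lintegral_map_equiv G (Homeomorph.smulOfNeZero r⁻¹ hr').toMeasurableEquiv).symm
    _ = ENNReal.ofReal r ^ Module.finrank ℝ F * ∫⁻ x, G x ∂μ := by
        rw [Measure.map_addHaar_smul μ hr', lintegral_smul_measure, smul_eq_mul, inv_pow, inv_inv,
          abs_of_pos (by positivity), ENNReal.ofReal_pow hr.le]

section BetaIntegral

open ProbabilityTheory (beta)

variable {a b : ℝ}

lemma lintegral_rpow_mul_one_sub_rpow (ha : -1 < a) (hb : -1 < b) :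
    ∫⁻ x in Ioo (0 : ℝ) 1, ENNReal.ofReal x ^ a * ENNReal.ofReal (1 - x) ^ b =
      ENNReal.ofReal (beta (a + 1) (b + 1)) := by
  have ha' : 0 < a + 1 := by linarith
  have hb' : 0 < b + 1 := by linarith
  have hB := ProbabilityTheory.beta_pos ha' hb'
  have h_density {x : ℝ} (hx : x ∈ Ioo (0 : ℝ) 1) :
      ENNReal.ofReal x ^ a * ENNReal.ofReal (1 - x) ^ b =
        ENNReal.ofReal (beta (a + 1) (b + 1)) * ENNReal.ofReal
          (1 / beta (a + 1) (b + 1) * x ^ (a + 1 - 1) * (1 - x) ^ (b + 1 - 1)) := by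
    rw [ENNReal.ofReal_rpow_of_pos hx.1, ENNReal.ofReal_rpow_of_pos (sub_pos.2 hx.2),
      ← ENNReal.ofReal_mul (Real.rpow_nonneg hx.1.le _), ← ENNReal.ofReal_mul hB.le,
      add_sub_cancel_right, add_sub_cancel_right, mul_assoc, ← mul_assoc (beta _ _),
      mul_one_div_cancel hB.ne', one_mul]
  rw [setLIntegral_congr_fun measurableSet_Ioo fun x hx => h_density hx,
    lintegral_const_mul' _ _ ENNReal.ofReal_ne_top, ← ProbabilityTheory.lintegral_betaPDF,
    ProbabilityTheory.lintegral_betaPDF_eq_one ha' hb', mul_one]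

lemma lintegral_sub_rpow_mul_sub_rpow (ha : -1 < a) (hb : -1 < b) {m n : ℝ} (hmn : m < n) :
    ∫⁻ x in Ioo m n, ENNReal.ofReal (x - m) ^ a * ENNReal.ofReal (n - x) ^ b =
      ENNReal.ofReal (beta (a + 1) (b + 1)) * ENNReal.ofReal (n - m) ^ (a + b + 1) := by
  have hL : 0 < n - m := sub_pos.2 hmn
  have h_image : (fun x => (n - m) * x + m) '' Ioo 0 1 = Ioo m n := by
    rw [image_affine_Ioo hL]; simp
  have h_deriv (x : ℝ) : HasDerivAt (fun x => (n - m) * x + m) (n - m) x := by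
    simpa using ((hasDerivAt_id x).const_mul (n - m)).add_const m
  have h_injective : InjOn (fun x => (n - m) * x + m) (Ioo 0 1) := fun x _ y _ hxy =>
    mul_left_cancel₀ hL.ne' (add_right_cancel hxy)
  have h_integrand (x : ℝ) : ENNReal.ofReal |n - m| * (ENNReal.ofReal ((n - m) * x + m - m) ^ a *
      ENNReal.ofReal (n - ((n - m) * x + m)) ^ b) = ENNReal.ofReal (n - m) ^ (a + b + 1)
        * (ENNReal.ofReal x ^ a * ENNReal.ofReal (1 - x) ^ b) := by
    have hL' : ENNReal.ofReal (n - m) ≠ 0 := (ENNReal.ofReal_pos.2 hL).ne'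
    rw [abs_of_pos hL, add_sub_cancel_right, show n - ((n - m) * x + m) = (n - m) * (1 - x) by ring,
      ENNReal.ofReal_mul hL.le, ENNReal.ofReal_mul hL.le,
      ENNReal.mul_rpow_of_ne_top ENNReal.ofReal_ne_top ENNReal.ofReal_ne_top,
      ENNReal.mul_rpow_of_ne_top ENNReal.ofReal_ne_top ENNReal.ofReal_ne_top,
      ENNReal.rpow_add _ _ hL' ENNReal.ofReal_ne_top,
      ENNReal.rpow_add _ _ hL' ENNReal.ofReal_ne_top, ENNReal.rpow_one]
    ring
  rw [← h_image, lintegral_image_eq_lintegral_abs_deriv_mul measurableSet_Ioo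
    (fun x _ => (h_deriv x).hasDerivWithinAt) h_injective, lintegral_congr h_integrand,
    lintegral_const_mul' _ _ (by finiteness), lintegral_rpow_mul_one_sub_rpow ha hb, mul_comm]

end BetaIntegral

section Radial

variable {F : Type*} [NormedAddCommGroup F] [NormedSpace ℝ F] [MeasurableSpace F] [BorelSpace F]
  [FiniteDimensional ℝ F] [Nontrivial F] (μ : Measure F) [μ.IsAddHaarMeasure]

lemma lintegral_ball_norm_rpow_mul_sub_norm_rpow_lt_top {a b R : ℝ}
    (ha : -(Module.finrank ℝ F : ℝ) < a) (hb : -1 < b) (hR : 0 < R) :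
    ∫⁻ x in Metric.ball (0 : F) R, ENNReal.ofReal ‖x‖ ^ a * ENNReal.ofReal (R - ‖x‖) ^ b ∂μ <
      ∞ := by
  have hd : 0 < Module.finrank ℝ F := Module.finrank_pos
  have hcast : ((Module.finrank ℝ F - 1 : ℕ) : ℝ) = Module.finrank ℝ F - 1 := by
    rw [Nat.cast_sub hd, Nat.cast_one]
  have h_radial : IntegrableOn
      (fun r : ℝ => r ^ (Module.finrank ℝ F - 1) • (r ^ a * (R - r) ^ b)) (Ioo 0 R) := by
    refine ⟨by fun_prop, ?_⟩
    have h_integrand {r : ℝ} (hr : r ∈ Ioo 0 R) :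
        ‖r ^ (Module.finrank ℝ F - 1) • (r ^ a * (R - r) ^ b)‖ₑ =
          ENNReal.ofReal (r - 0) ^ (Module.finrank ℝ F - 1 + a) * ENNReal.ofReal (R - r) ^ b := by
      have hr₀ : 0 < r := hr.1
      have hrR : 0 < R - r := sub_pos.2 hr.2
      rw [Real.enorm_of_nonneg (by positivity), smul_eq_mul, ← mul_assoc, ← Real.rpow_natCast,
        ← Real.rpow_add hr₀, hcast, sub_zero, ENNReal.ofReal_rpow_of_pos hr₀,
        ENNReal.ofReal_rpow_of_pos hrR, ENNReal.ofReal_mul (by positivity)]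
    rw [hasFiniteIntegral_iff_enorm, setLIntegral_congr_fun measurableSet_Ioo fun r => h_integrand,
      lintegral_sub_rpow_mul_sub_rpow (by linarith) hb hR]
    have : 0 < ENNReal.ofReal (R - 0) := by simpa using hR
    finiteness
  refine lt_of_eq_of_lt (setLIntegral_congr_fun_ae measurableSet_ball ?_)
    ((integrableOn_fun_norm_addHaar μ).2 h_radial).lintegral_lt_top
  filter_upwards [μ.ae_ne 0] with x hx hxR
  have hx₀ : 0 < ‖x‖ := norm_pos_iff.2 hx
  have hxR : 0 < R - ‖x‖ := sub_pos.2 (mem_ball_zero_iff.1 hxR)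
  rw [ENNReal.ofReal_rpow_of_pos hx₀, ENNReal.ofReal_rpow_of_pos hxR,
    ← ENNReal.ofReal_mul (by positivity)]

end Radial

section Autocorrelation

variable {G : Type*} [AddCommGroup G] [MeasurableSpace G] {μ : Measure G} {k : G → ℝ≥0∞}

/-- The autocorrelation `z ↦ ∫ k(x) k(x + z) dμ(x)` of a kernel `k`, i.e. the kernel of `T* T` for
the convolution operator `T` with kernel `k`. -/
noncomputable def autocorrelation (k : G → ℝ≥0∞) (μ : Measure G) (z : G) : ℝ≥0∞ :=
  ∫⁻ x, k x * k (x + z) ∂μ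

variable [MeasurableAdd₂ G]

lemma autocorrelation_comp_sub_right [μ.IsAddRightInvariant] (k : G → ℝ≥0∞)
    (x : G) :
    autocorrelation (fun y => k (y - x)) μ = autocorrelation k μ := by
  ext z
  rw [autocorrelation, autocorrelation,
    ← lintegral_sub_right_eq_self (fun y => k y * k (y + z)) x]
  exact lintegral_congr fun y => by rw [add_sub_right_comm]

lemma lintegral_mul_sub_eq_autocorrelation [MeasurableNeg G] [μ.IsAddLeftInvariant]
    [μ.IsNegInvariant] (k : G → ℝ≥0∞) (y y' : G) :
    ∫⁻ x, k (y - x) * k (y' - x) ∂μ = autocorrelation k μ (y' - y) := by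
  rw [autocorrelation, ← lintegral_sub_left_eq_self _ y]
  exact lintegral_congr fun x => by
    rw [sub_sub_cancel, show y' - (y - x) = x + (y' - y) by abel]

variable [SFinite μ]

lemma measurable_autocorrelation (hk : Measurable k) : Measurable (autocorrelation k μ) :=
  Measurable.lintegral_prod_right' (f := fun p : G × G => k p.2 * k (p.2 + p.1)) (by fun_prop)

variable [MeasurableNeg G] [μ.IsAddLeftInvariant]

lemma lintegral_prod_mul_sub (hk : Measurable k) {V : G → ℝ≥0∞} (hV : Measurable V) :
    ∫⁻ p : G × G, k p.1 * k p.2 * V (p.2 - p.1) ∂μ.prod μ =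
      ∫⁻ z, autocorrelation k μ z * V z ∂μ := by
  have hF : Measurable fun p : G × G => k p.1 * k (p.1 + p.2) * V p.2 := by fun_prop
  have h_shear := (measurePreserving_prod_sub μ μ).lintegral_comp hF
  simp only [add_sub_cancel] at h_shear
  rw [h_shear, lintegral_prod_symm _ (by fun_prop)]
  exact lintegral_congr fun z => lintegral_mul_const (V z) (f := fun x => k x * k (x + z))
    (by fun_prop)

lemma lintegral_autocorrelation (hk : Measurable k) :
    ∫⁻ z, autocorrelation k μ z ∂μ = (∫⁻ x, k x ∂μ) ^ 2 := by
  have h := lintegral_prod_mul_sub (μ := μ) hk (V := 1) measurable_one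
  simp only [Pi.one_apply, mul_one] at h
  rw [← h, lintegral_prod_mul hk.aemeasurable hk.aemeasurable, sq]

/-- The square of the integral is a double integral against `k(y - x) k(y' - x)`; inserting the
weight `V(y' - y)` in the Cauchy–Schwarz inequality brings in only the autocorrelation, rather than
the size of `k` itself. -/
lemma lintegral_sub_mul_pow_four_le (hk : Measurable k) {V : G → ℝ≥0∞} (hV : Measurable V)
    (hV_zero : ∀ z, V z ≠ 0) (hV_top : ∀ᵐ z ∂μ, V z ≠ ∞) {g : G → ℝ≥0∞} (hg : Measurable g)
    (x : G) :
    (∫⁻ y, k (y - x) * g y ∂μ) ^ 4 ≤ (∫⁻ z, autocorrelation k μ z * V z ∂μ) *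
      ∫⁻ p : G × G, k (p.1 - x) * k (p.2 - x) * V (p.2 - p.1) *
        (g p.1 * g p.2 * (V (p.2 - p.1))⁻¹) ^ 2 ∂μ.prod μ := by
  have h_top : ∀ᵐ p : G × G ∂μ.prod μ, V (p.2 - p.1) ≠ ∞ :=
    ((Measure.quasiMeasurePreserving_snd (μ := μ) (ν := μ)).comp
      (measurePreserving_prod_sub μ μ).quasiMeasurePreserving).ae hV_top
  have h_square : (∫⁻ y, k (y - x) * g y ∂μ) ^ 2 = ∫⁻ p : G × G, k (p.1 - x) * k (p.2 - x) *
      V (p.2 - p.1) * (g p.1 * g p.2 * (V (p.2 - p.1))⁻¹) ∂μ.prod μ := by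
    rw [sq, ← lintegral_prod_mul (by fun_prop) (by fun_prop)]
    refine lintegral_congr_ae (h_top.mono fun p hp => ?_)
    beta_reduce
    rw [mul_mul_mul_comm, mul_assoc _ (V _), mul_left_comm (V _),
      ENNReal.mul_inv_cancel (hV_zero _) hp, mul_one]
  have h_weight : ∫⁻ p : G × G, k (p.1 - x) * k (p.2 - x) * V (p.2 - p.1) ∂μ.prod μ =
      ∫⁻ z, autocorrelation k μ z * V z ∂μ := by
    rw [lintegral_prod_mul_sub (k := fun y => k (y - x)) (by fun_prop) hV,
      autocorrelation_comp_sub_right]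
  rw [← h_weight, show 4 = 2 * 2 from rfl, pow_mul, h_square]
  have := lintegral_mul_rpow_le (μ := μ.prod μ) (c := 2)
    (φ := fun p => k (p.1 - x) * k (p.2 - x) * V (p.2 - p.1))
    (h := fun p => g p.1 * g p.2 * (V (p.2 - p.1))⁻¹) (by fun_prop) (by fun_prop) one_le_two
  simpa [show (2 : ℝ) - 1 = 1 by norm_num] using this

variable [μ.IsNegInvariant]

lemma lintegral_lintegral_mul_inv_sq_le (hk : Measurable k) {V : G → ℝ≥0∞} (hV : Measurable V)
    (hkV : autocorrelation k μ ≤ V) {g : G → ℝ≥0∞} (hg : Measurable g) :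
    ∫⁻ x, ∫⁻ p : G × G, k (p.1 - x) * k (p.2 - x) * V (p.2 - p.1)
      * (g p.1 * g p.2 * (V (p.2 - p.1))⁻¹) ^ 2 ∂μ.prod μ ∂μ ≤ (∫⁻ y, g y ^ 2 ∂μ) ^ 2 := by
  rw [lintegral_lintegral_swap (by fun_prop), sq (∫⁻ y, g y ^ 2 ∂μ),
    ← lintegral_prod_mul (by fun_prop) (by fun_prop)]
  refine lintegral_mono fun p => ?_
  set v := V (p.2 - p.1)
  rw [lintegral_mul_const _ (by fun_prop), lintegral_mul_const _ (by fun_prop),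
    lintegral_mul_sub_eq_autocorrelation]
  calc autocorrelation k μ (p.2 - p.1) * v * (g p.1 * g p.2 * v⁻¹) ^ 2
      ≤ v * v * (g p.1 * g p.2 * v⁻¹) ^ 2 := by gcongr; exact hkV _
    _ = g p.1 ^ 2 * g p.2 ^ 2 * (v * v⁻¹) ^ 2 := by ring
    _ ≤ g p.1 ^ 2 * g p.2 ^ 2 :=
      mul_le_of_le_one_right' (pow_le_one₀ zero_le (ENNReal.mul_inv_le_one _))

lemma lintegral_lintegral_sub_mul_pow_four_le (hk : Measurable k)
    (hk_top : ∫⁻ z, autocorrelation k μ z ^ 2 ∂μ ≠ ∞) {g : G → ℝ≥0∞} (hg : Measurable g) :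
    ∫⁻ x, (∫⁻ y, k (y - x) * g y ∂μ) ^ 4 ∂μ ≤
      ((∫⁻ x, k x ∂μ) ^ 2 + ∫⁻ z, autocorrelation k μ z ^ 2 ∂μ) * (∫⁻ y, g y ^ 2 ∂μ) ^ 2 := by
  have h_meas : Measurable (autocorrelation k μ) := measurable_autocorrelation hk
  have h_lt_top : ∀ᵐ z ∂μ, autocorrelation k μ z ^ 2 < ∞ := ae_lt_top (h_meas.pow_const 2) hk_top
  set V : G → ℝ≥0∞ := fun z => 1 + autocorrelation k μ z
  have hV : Measurable V := by fun_prop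
  have hV_top : ∀ᵐ z ∂μ, V z ≠ ∞ := h_lt_top.mono fun z hz => by simpa [V] using hz.ne
  have h_mass : ∫⁻ z, autocorrelation k μ z * V z ∂μ =
      (∫⁻ x, k x ∂μ) ^ 2 + ∫⁻ z, autocorrelation k μ z ^ 2 ∂μ := by
    simp only [V, mul_add, mul_one, ← sq]
    rw [lintegral_add_left h_meas, lintegral_autocorrelation hk]
  rw [← h_mass]
  calc _ ≤ ∫⁻ x, (∫⁻ z, autocorrelation k μ z * V z ∂μ) * ∫⁻ p : G × G, k (p.1 - x) *
        k (p.2 - x) * V (p.2 - p.1) * (g p.1 * g p.2 * (V (p.2 - p.1))⁻¹) ^ 2 ∂μ.prod μ ∂μ :=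
        lintegral_mono (lintegral_sub_mul_pow_four_le hk hV (fun z => by simp [V]) hV_top hg)
    _ ≤ _ := by
        rw [lintegral_const_mul _ (by fun_prop)]
        gcongr
        exact lintegral_lintegral_mul_inv_sq_le hk hV (fun _ => le_add_self) hg

end Autocorrelation

section Plane

local notation "ℝ²" => EuclideanSpace ℝ (Fin 2)

lemma lintegral_euclideanPlane {G : ℝ² → ℝ≥0∞} (hG : Measurable G) :
    ∫⁻ p, G p = ∫⁻ a, ∫⁻ b, G !₂[a, b] := by
  have h_toLp := (EuclideanSpace.volume_preserving_symm_measurableEquiv_toLp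
    (Fin 2)).symm.lintegral_comp hG
  have h_meas : Measurable fun v : Fin 2 → ℝ => G (WithLp.toLp 2 v) :=
    hG.comp (WithLp.measurable_toLp 2 _)
  have h_prod := (volume_preserving_finTwoArrow ℝ).symm.lintegral_comp h_meas
  rw [Measure.volume_eq_prod] at h_prod
  calc ∫⁻ p, G p = ∫⁻ z : ℝ × ℝ, G !₂[z.1, z.2] ∂(volume.prod volume) := by
        rw [← h_toLp]; exact h_prod.symm
    _ = ∫⁻ a, ∫⁻ b, G !₂[a, b] := lintegral_prod _ (by fun_prop)

lemma norm_sq_euclideanPlane (p : ℝ²) : ‖p‖ ^ 2 = p 0 ^ 2 + p 1 ^ 2 := by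
  simp [EuclideanSpace.norm_sq_eq]

lemma exists_linearIsometryEquiv_eq_single (z : ℝ²) :
    ∃ U : ℝ² ≃ₗᵢ[ℝ] ℝ², U z = EuclideanSpace.single 0 ‖z‖ :=
  ⟨Submodule.reflection (ℝ ∙ (z - EuclideanSpace.single 0 ‖z‖))ᗮ,
    Submodule.reflection_sub (by simp)⟩

lemma exists_linearIsometryEquiv_inner_eq (z : ℝ²) :
    ∃ U : ℝ² ≃ₗᵢ[ℝ] ℝ², ∀ p, ⟪p, z⟫ = U p 0 * ‖z‖ := by
  obtain ⟨U, hU⟩ := exists_linearIsometryEquiv_eq_single z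
  refine ⟨U, fun p => ?_⟩
  rw [← U.inner_map_map p z, hU, EuclideanSpace.inner_single_right]
  simp [mul_comm]

lemma lintegral_comp_linearIsometryEquiv {E : Type*} [NormedAddCommGroup E]
    [InnerProductSpace ℝ E] [FiniteDimensional ℝ E] [MeasurableSpace E] [BorelSpace E]
    (U : E ≃ₗᵢ[ℝ] E) (G : E → ℝ≥0∞) : ∫⁻ p, G (U p) = ∫⁻ p, G p :=
  U.measurePreserving.lintegral_comp_emb U.toHomeomorph.measurableEmbedding G

end Plane

/-- The kernel `(1 - |z|²)₊^(-e)`. For `e = 1/2` it is the profile of the fundamental solution of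
the two-dimensional wave equation on a time slice of the light cone. -/
noncomputable def coneKernel {E : Type*} [NormedAddCommGroup E] (e : ℝ) (z : E) : ℝ≥0∞ :=
  (Metric.ball 0 1).indicator (fun z => ENNReal.ofReal (1 - ‖z‖ ^ 2) ^ (-e)) z

section ConeKernel

variable {E : Type*} [NormedAddCommGroup E] {e e' : ℝ} {z z' : E}

lemma coneKernel_of_norm_lt_one (hz : ‖z‖ < 1) :
    coneKernel e z = ENNReal.ofReal (1 - ‖z‖ ^ 2) ^ (-e) :=
  indicator_of_mem (by simpa using hz) _

lemma coneKernel_of_one_le_norm (hz : 1 ≤ ‖z‖) : coneKernel e z = 0 :=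
  indicator_of_notMem (by simpa using hz) _

lemma coneKernel_ne_top : coneKernel e z ≠ ∞ := by
  rcases lt_or_ge ‖z‖ 1 with hz | hz
  · have : 0 < ENNReal.ofReal (1 - ‖z‖ ^ 2) :=
      ENNReal.ofReal_pos.2 (by nlinarith [norm_nonneg z])
    rw [coneKernel_of_norm_lt_one hz]
    finiteness
  · simp [coneKernel_of_one_le_norm hz]

lemma coneKernel_congr_norm (h : ‖z‖ = ‖z'‖) : coneKernel e z = coneKernel e z' := by
  rcases lt_or_ge ‖z‖ 1 with hz | hz
  · rw [coneKernel_of_norm_lt_one hz, coneKernel_of_norm_lt_one (h ▸ hz), h]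
  · rw [coneKernel_of_one_le_norm hz, coneKernel_of_one_le_norm (h ▸ hz)]

lemma coneKernel_mono (h : e ≤ e') : coneKernel e z ≤ coneKernel e' z := by
  rcases lt_or_ge ‖z‖ 1 with hz | hz
  · rw [coneKernel_of_norm_lt_one hz, coneKernel_of_norm_lt_one hz]
    refine ENNReal.rpow_le_rpow_of_exponent_ge ?_ (neg_le_neg h)
    exact ENNReal.ofReal_le_one.2 (sub_le_self _ (by positivity))
  · simp [coneKernel_of_one_le_norm hz]

lemma coneKernel_mul_coneKernel : coneKernel e z * coneKernel e' z = coneKernel (e + e') z := by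
  rcases lt_or_ge ‖z‖ 1 with hz | hz
  · have h_pos : 0 < 1 - ‖z‖ ^ 2 := by nlinarith [norm_nonneg z]
    simp only [coneKernel_of_norm_lt_one hz]
    rw [← ENNReal.rpow_add _ _ (by simpa using h_pos) ENNReal.ofReal_ne_top, neg_add]
  · simp [coneKernel_of_one_le_norm hz]

lemma coneKernel_rpow {c : ℝ} (hc : 0 < c) : coneKernel e z ^ c = coneKernel (e * c) z := by
  rcases lt_or_ge ‖z‖ 1 with hz | hz
  · rw [coneKernel_of_norm_lt_one hz, coneKernel_of_norm_lt_one hz, ← ENNReal.rpow_mul, neg_mul]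
  · simp [coneKernel_of_one_le_norm hz, hc]

@[fun_prop]
lemma measurable_coneKernel [MeasurableSpace E] [OpensMeasurableSpace E] :
    Measurable (coneKernel e : E → ℝ≥0∞) :=
  Measurable.indicator (by fun_prop) Metric.isOpen_ball.measurableSet

lemma lintegral_coneKernel_lt_top [NormedSpace ℝ E] [FiniteDimensional ℝ E] [Nontrivial E]
    [MeasurableSpace E] [BorelSpace E] (μ : Measure E) [μ.IsAddHaarMeasure] (he : e < 1) :
    ∫⁻ z, coneKernel e z ∂μ < ∞ := by
  have h_radial := lintegral_ball_norm_rpow_mul_sub_norm_rpow_lt_top μ (a := 0) (b := -max e 0)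
    (by simp [Module.finrank_pos]) (by simp [he]) one_pos
  refine (lintegral_mono fun z => coneKernel_mono (le_max_left e 0)).trans_lt
    (lt_of_le_of_lt ?_ h_radial)
  rw [← lintegral_indicator Metric.isOpen_ball.measurableSet]
  refine lintegral_mono fun z => ?_
  rcases lt_or_ge ‖z‖ 1 with hz | hz
  · rw [coneKernel_of_norm_lt_one hz, indicator_of_mem (by simpa using hz), ENNReal.rpow_zero,
      one_mul]
    refine ennreal_rpow_le_rpow_of_nonpos (by simp) (ENNReal.ofReal_le_ofReal ?_)
    nlinarith [norm_nonneg z]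
  · simp [coneKernel_of_one_le_norm hz]

end ConeKernel

section PlanarConeKernel

local notation "ℝ²" => EuclideanSpace ℝ (Fin 2)

variable {e : ℝ}

lemma coneKernel_euclideanPlane_eq_zero {a : ℝ} (ha : 1 ≤ |a|) (b : ℝ) :
    coneKernel e (!₂[a, b] : ℝ²) = 0 :=
  coneKernel_of_one_le_norm (ha.trans (by simpa using PiLp.norm_apply_le (!₂[a, b] : ℝ²) 0))

lemma lintegral_coneKernel_slice (he : e < 1) {a : ℝ} (ha : |a| < 1) :
    ∫⁻ b, coneKernel e (!₂[a, b] : ℝ²) =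
      ENNReal.ofReal (ProbabilityTheory.beta (1 - e) (1 - e)) *
        ENNReal.ofReal (2 * √(1 - a ^ 2)) ^ (1 - 2 * e) := by
  have h_pos : 0 < 1 - a ^ 2 := by rw [sub_pos, sq_lt_one_iff_abs_lt_one]; exact ha
  set R := √(1 - a ^ 2)
  have hR_pos : 0 < R := Real.sqrt_pos.2 h_pos
  have hR_sq : R ^ 2 = 1 - a ^ 2 := Real.sq_sqrt h_pos.le
  have h_slice (b : ℝ) : coneKernel e (!₂[a, b] : ℝ²) = (Ioo (-R) R).indicator
      (fun b => ENNReal.ofReal (b - -R) ^ (-e) * ENNReal.ofReal (R - b) ^ (-e)) b := by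
    have h_norm : 1 - ‖(!₂[a, b] : ℝ²)‖ ^ 2 = (b - -R) * (R - b) := by
      rw [norm_sq_euclideanPlane]
      simp only [Matrix.cons_val_zero, Matrix.cons_val_one]
      linear_combination -hR_sq
    by_cases hb : b ∈ Ioo (-R) R
    · have h_left : 0 < b - -R := sub_pos.2 hb.1
      have h_right : 0 < R - b := sub_pos.2 hb.2
      rw [coneKernel_of_norm_lt_one (by nlinarith [mul_pos h_left h_right]), indicator_of_mem hb,
        h_norm, ENNReal.ofReal_mul h_left.le, ENNReal.mul_rpow_of_ne_top (by simp) (by simp)]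
    · rw [indicator_of_notMem hb, coneKernel_of_one_le_norm]
      rw [mem_Ioo, ← abs_lt, not_lt] at hb
      nlinarith [sq_le_sq' (by linarith) hb, sq_abs b, norm_nonneg (!₂[a, b] : ℝ²)]
  simp only [h_slice]
  rw [lintegral_indicator measurableSet_Ioo,
    lintegral_sub_rpow_mul_sub_rpow (by linarith) (by linarith) (by linarith)]
  rw [show -e + 1 = 1 - e by ring, show R - -R = 2 * R by ring,
    show -e + -e + 1 = 1 - 2 * e by ring]

end PlanarConeKernel

section ConeKernelAutocorrelation

variable {E : Type*} [NormedAddCommGroup E] {e : ℝ} {z : E}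

lemma autocorrelation_coneKernel_eq_zero [MeasurableSpace E] {μ : Measure E} (hz : 2 ≤ ‖z‖) :
    autocorrelation (coneKernel e) μ z = 0 := by
  have h_disjoint (x : E) : coneKernel e x * coneKernel e (x + z) = 0 := by
    rcases lt_or_ge ‖x‖ 1 with hx | hx
    · rw [coneKernel_of_one_le_norm (z := x + z), mul_zero]
      have := norm_sub_norm_le z (-x)
      rw [sub_neg_eq_add, norm_neg, add_comm z] at this
      linarith
    · rw [coneKernel_of_one_le_norm hx, zero_mul]
  simp [autocorrelation, h_disjoint]

variable [InnerProductSpace ℝ E]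

lemma coneKernel_mul_coneKernel_sub_le (he : 0 ≤ e) (x : E) :
    coneKernel e x * coneKernel e (z - x) ≤
      coneKernel e x * ENNReal.ofReal (2 * ⟪x, z⟫ - ‖z‖ ^ 2) ^ (-e) := by
  rcases lt_or_ge ‖x‖ 1 with hx | hx
  · gcongr
    rcases lt_or_ge ‖z - x‖ 1 with hzx | hzx
    · rw [coneKernel_of_norm_lt_one hzx]
      refine ennreal_rpow_le_rpow_of_nonpos (by simpa) (ENNReal.ofReal_le_ofReal ?_)
      rw [norm_sub_sq_real, real_inner_comm]
      nlinarith [norm_nonneg x]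
    · simp [coneKernel_of_one_le_norm hzx]
  · simp [coneKernel_of_one_le_norm hx]

variable [FiniteDimensional ℝ E] [MeasurableSpace E] [BorelSpace E]

/-- The reflection `x ↦ z - x` exchanges the two singular factors and the two half-spaces bounded
by the bisector of `0` and `z`, so only the one on which `x` is the more singular matters. -/
lemma autocorrelation_coneKernel_le_halfSpace (he : 0 ≤ e) :
    autocorrelation (coneKernel e) volume z ≤ 2 * ∫⁻ x in {x : E | ‖z‖ ^ 2 ≤ 2 * ⟪x, z⟫},
      coneKernel e x * ENNReal.ofReal (2 * ⟪x, z⟫ - ‖z‖ ^ 2) ^ (-e) := by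
  set P := {x : E | ‖z‖ ^ 2 ≤ 2 * ⟪x, z⟫} with hP
  have hP_meas : MeasurableSet P := measurableSet_le (by fun_prop) (by fun_prop)
  set F : E → ℝ≥0∞ := fun x => coneKernel e x * coneKernel e (z - x) with hF
  have h_autocorr : autocorrelation (coneKernel e) volume z = ∫⁻ x, F x := by
    rw [autocorrelation, ← lintegral_neg_eq_self]
    refine lintegral_congr fun x => ?_
    rw [coneKernel_congr_norm (norm_neg x), neg_add_eq_sub]
  have h_compl : ∫⁻ x in Pᶜ, F x ≤ ∫⁻ x in P, F x := by
    rw [← lintegral_indicator hP_meas.compl, ← lintegral_indicator hP_meas,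
      ← lintegral_sub_left_eq_self _ z]
    refine lintegral_mono fun x => ?_
    by_cases hx : x ∈ P
    · rw [indicator_of_mem hx]
      refine (indicator_le_self _ _ _).trans ?_
      simp [hF, mul_comm]
    · have hx' : z - x ∈ P := by
        simp only [hP, mem_ofPred_eq, not_le] at hx ⊢
        rw [inner_sub_left, real_inner_self_eq_norm_sq]
        linarith
      simp [hx']
  calc autocorrelation (coneKernel e) volume z = (∫⁻ x in P, F x) + ∫⁻ x in Pᶜ, F x := by
        rw [h_autocorr, lintegral_add_compl F hP_meas]
    _ ≤ 2 * ∫⁻ x in P, F x := by rw [two_mul]; exact add_le_add le_rfl h_compl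
    _ ≤ _ := by gcongr with x; exact coneKernel_mul_coneKernel_sub_le he x

end ConeKernelAutocorrelation

section PlanarAutocorrelation

local notation "ℝ²" => EuclideanSpace ℝ (Fin 2)

variable {e : ℝ}

lemma lintegral_coneKernel_slice_le (he : 1 / 2 ≤ e) (he' : e < 1) {a : ℝ} (ha : 0 ≤ a)
    (ha' : a < 1) :
    ∫⁻ b, coneKernel e (!₂[a, b] : ℝ²) ≤
      ENNReal.ofReal (ProbabilityTheory.beta (1 - e) (1 - e)) *
        ENNReal.ofReal (1 - a) ^ (1 / 2 - e) := by
  have h_sqrt : √(1 - a) ≤ 2 * √(1 - a ^ 2) := by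
    have : √(1 - a) ≤ √(1 - a ^ 2) := Real.sqrt_le_sqrt (by nlinarith)
    linarith [Real.sqrt_nonneg (1 - a)]
  rw [lintegral_coneKernel_slice he' (abs_lt.2 ⟨by linarith, ha'⟩)]
  gcongr
  calc ENNReal.ofReal (2 * √(1 - a ^ 2)) ^ (1 - 2 * e)
      ≤ ENNReal.ofReal (√(1 - a)) ^ (1 - 2 * e) :=
        ennreal_rpow_le_rpow_of_nonpos (by linarith) (ENNReal.ofReal_le_ofReal h_sqrt)
    _ = ENNReal.ofReal (1 - a) ^ (1 / 2 - e) := by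
        rw [Real.sqrt_eq_rpow, ← ENNReal.ofReal_rpow_of_pos (by linarith), ← ENNReal.rpow_mul]
        congr 1; ring

lemma lintegral_halfSpace_coneKernel {z : ℝ²} (hz : z ≠ 0) :
    ∫⁻ x in {x : ℝ² | ‖z‖ ^ 2 ≤ 2 * ⟪x, z⟫},
        coneKernel e x * ENNReal.ofReal (2 * ⟪x, z⟫ - ‖z‖ ^ 2) ^ (-e) =
      ∫⁻ a in Ici (‖z‖ / 2), ENNReal.ofReal (‖z‖ * (2 * a - ‖z‖)) ^ (-e) *
        ∫⁻ b, coneKernel e (!₂[a, b] : ℝ²) := by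
  obtain ⟨U, hU⟩ := exists_linearIsometryEquiv_inner_eq z
  have hd : 0 < ‖z‖ := norm_pos_iff.2 hz
  set d := ‖z‖
  set w : ℝ → ℝ≥0∞ := (Ici (d / 2)).indicator fun a => ENNReal.ofReal (d * (2 * a - d)) ^ (-e)
    with hw
  have hw_meas : Measurable w := Measurable.indicator (by fun_prop) measurableSet_Ici
  have h_coord (x : ℝ²) : {x : ℝ² | d ^ 2 ≤ 2 * ⟪x, z⟫}.indicator
      (fun x => coneKernel e x * ENNReal.ofReal (2 * ⟪x, z⟫ - d ^ 2) ^ (-e)) x =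
        w (U x 0) * coneKernel e (U x) := by
    have h_mem : d ^ 2 ≤ 2 * ⟪x, z⟫ ↔ d / 2 ≤ U x 0 := by
      rw [hU]
      constructor <;> intro h <;> nlinarith
    simp only [hw, indicator_apply, mem_ofPred_eq, mem_Ici, h_mem, ite_mul, zero_mul]
    rw [coneKernel_congr_norm (U.norm_map x), mul_comm (coneKernel e x), hU]
    ring_nf
  calc _ = ∫⁻ x : ℝ², w (U x 0) * coneKernel e (U x) := by
        rw [← lintegral_indicator (measurableSet_le (by fun_prop) (by fun_prop))]
        exact lintegral_congr h_coord
    _ = ∫⁻ a, ∫⁻ b, w a * coneKernel e (!₂[a, b] : ℝ²) := by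
        rw [lintegral_comp_linearIsometryEquiv U fun x => w (x 0) * coneKernel e x,
          lintegral_euclideanPlane]
        · simp only [Matrix.cons_val_zero]
        · exact (hw_meas.comp (by fun_prop)).mul measurable_coneKernel
    _ = _ := by
        rw [← lintegral_indicator measurableSet_Ici]
        refine lintegral_congr fun a => ?_
        rw [lintegral_const_mul _ (by fun_prop)]
        simp only [hw, indicator_apply, ite_mul, zero_mul]

lemma autocorrelation_coneKernel_le_lintegral_Ioo (he : 1 / 2 ≤ e) (he' : e < 1) {z : ℝ²}
    (hz : z ≠ 0) :
    autocorrelation (coneKernel e) volume z ≤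
      2 * ENNReal.ofReal (ProbabilityTheory.beta (1 - e) (1 - e)) *
        ∫⁻ a in Ioo (‖z‖ / 2) 1, ENNReal.ofReal (‖z‖ * (2 * a - ‖z‖)) ^ (-e) *
          ENNReal.ofReal (1 - a) ^ (1 / 2 - e) := by
  have hd : 0 < ‖z‖ := norm_pos_iff.2 hz
  set B := ENNReal.ofReal (ProbabilityTheory.beta (1 - e) (1 - e))
  set w : ℝ → ℝ≥0∞ := fun a => ENNReal.ofReal (‖z‖ * (2 * a - ‖z‖)) ^ (-e)
  have h_slice (a : ℝ) (ha : a ∈ Ici (‖z‖ / 2)) : w a * ∫⁻ b, coneKernel e (!₂[a, b] : ℝ²) ≤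
      (Iio 1).indicator (fun a => w a * (B * ENNReal.ofReal (1 - a) ^ (1 / 2 - e))) a := by
    have ha_nonneg : 0 ≤ a := by linarith [mem_Ici.1 ha]
    rcases lt_or_ge a 1 with ha_lt | ha_ge
    · rw [indicator_of_mem (by exact ha_lt)]
      gcongr
      exact lintegral_coneKernel_slice_le he he' ha_nonneg ha_lt
    · simp [coneKernel_euclideanPlane_eq_zero (ha_ge.trans (le_abs_self a))]
  calc autocorrelation (coneKernel e) volume z
      ≤ 2 * ∫⁻ a in Ici (‖z‖ / 2), w a * ∫⁻ b, coneKernel e (!₂[a, b] : ℝ²) := by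
        rw [← lintegral_halfSpace_coneKernel hz]
        exact autocorrelation_coneKernel_le_halfSpace (by linarith)
    _ ≤ 2 * ∫⁻ a in Ici (‖z‖ / 2), (Iio 1).indicator
          (fun a => w a * (B * ENNReal.ofReal (1 - a) ^ (1 / 2 - e))) a := by
        gcongr 2 * ?_
        exact setLIntegral_mono' measurableSet_Ici h_slice
    _ = 2 * ∫⁻ a in Ioo (‖z‖ / 2) 1, w a * (B * ENNReal.ofReal (1 - a) ^ (1 / 2 - e)) := by
        rw [setLIntegral_indicator measurableSet_Iio, inter_comm, Ici_inter_Iio,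
          restrict_Ioo_eq_restrict_Ico]
    _ = _ := by
        simp only [mul_left_comm _ B]
        rw [lintegral_const_mul _ (by fun_prop), mul_assoc]

lemma lintegral_Ioo_rpow_mul_rpow (he : e < 1) {d : ℝ} (hd : 0 < d) (hd' : d < 2) :
    ∫⁻ a in Ioo (d / 2) 1, ENNReal.ofReal (d * (2 * a - d)) ^ (-e) *
        ENNReal.ofReal (1 - a) ^ (1 / 2 - e) =
      ENNReal.ofReal (ProbabilityTheory.beta (1 - e) (3 / 2 - e)) *
        (ENNReal.ofReal (2 * d) ^ (-e) * ENNReal.ofReal (1 - d / 2) ^ (3 / 2 - 2 * e)) := by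
  calc _ = ∫⁻ a in Ioo (d / 2) 1, ENNReal.ofReal (2 * d) ^ (-e) *
        (ENNReal.ofReal (a - d / 2) ^ (-e) * ENNReal.ofReal (1 - a) ^ (1 / 2 - e)) := by
        refine lintegral_congr fun a => ?_
        rw [show d * (2 * a - d) = 2 * d * (a - d / 2) by ring,
          ENNReal.ofReal_mul (by positivity),
          ENNReal.mul_rpow_of_ne_top (by finiteness) (by finiteness), mul_assoc]
    _ = _ := by
        rw [lintegral_const_mul _ (by fun_prop),
          lintegral_sub_rpow_mul_sub_rpow (by linarith) (by linarith) (by linarith),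
          show -e + 1 = 1 - e by ring, show 1 / 2 - e + 1 = 3 / 2 - e by ring,
          show -e + (1 / 2 - e) + 1 = 3 / 2 - 2 * e by ring]
        ring

lemma exists_autocorrelation_coneKernel_le (he : 1 / 2 ≤ e) (he' : e < 1) :
    ∃ K : ℝ≥0∞, K ≠ ∞ ∧ ∀ z : ℝ², z ≠ 0 → ‖z‖ < 2 →
      autocorrelation (coneKernel e) volume z ≤
        K * (ENNReal.ofReal ‖z‖ ^ (-e) * ENNReal.ofReal (2 - ‖z‖) ^ (3 / 2 - 2 * e)) := by
  refine ⟨2 * ENNReal.ofReal (ProbabilityTheory.beta (1 - e) (1 - e)) *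
    ENNReal.ofReal (ProbabilityTheory.beta (1 - e) (3 / 2 - e)) *
      (ENNReal.ofReal 2 ^ (-e) * ENNReal.ofReal (1 / 2) ^ (3 / 2 - 2 * e)), by finiteness,
    fun z hz hz' => ?_⟩
  refine (autocorrelation_coneKernel_le_lintegral_Ioo he he' hz).trans (le_of_eq ?_)
  rw [lintegral_Ioo_rpow_mul_rpow he' (norm_pos_iff.2 hz) hz',
    show 1 - ‖z‖ / 2 = 1 / 2 * (2 - ‖z‖) by ring, ENNReal.ofReal_mul (by norm_num),
    ENNReal.ofReal_mul (by norm_num), ENNReal.mul_rpow_of_ne_top (by simp) (by simp),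
    ENNReal.mul_rpow_of_ne_top (by simp) (by simp)]
  ring

lemma lintegral_autocorrelation_coneKernel_sq_ne_top (he : 1 / 2 ≤ e) (he' : e < 1) :
    ∫⁻ z : ℝ², autocorrelation (coneKernel e) volume z ^ 2 ≠ ∞ := by
  obtain ⟨K, hK, h_le⟩ := exists_autocorrelation_coneKernel_le he he'
  have h_radial := lintegral_ball_norm_rpow_mul_sub_norm_rpow_lt_top (volume : Measure ℝ²)
    (a := -e * 2) (b := (3 / 2 - 2 * e) * 2) (by simp; linarith) (by linarith) two_pos
  refine (lt_of_le_of_lt ?_ (ENNReal.mul_lt_top (ENNReal.pow_lt_top hK.lt_top (n := 2))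
    h_radial)).ne
  rw [← lintegral_indicator Metric.isOpen_ball.measurableSet, ← lintegral_const_mul' _ _ (by simpa)]
  refine lintegral_mono_ae ?_
  filter_upwards [volume.ae_ne 0] with z hz
  rcases lt_or_ge ‖z‖ 2 with hz' | hz'
  · rw [indicator_of_mem (by simpa using hz')]
    calc autocorrelation (coneKernel e) volume z ^ 2
        ≤ (K * (ENNReal.ofReal ‖z‖ ^ (-e) * ENNReal.ofReal (2 - ‖z‖) ^ (3 / 2 - 2 * e))) ^ 2 := by
          gcongr
          exact h_le z hz hz'
      _ = _ := by
          simp only [mul_pow, ← ENNReal.rpow_mul_natCast, Nat.cast_ofNat]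
  · simp [autocorrelation_coneKernel_eq_zero hz']

lemma exists_lintegral_coneKernel_mul_pow_four_le (he : e < 1) :
    ∃ K : ℝ≥0∞, K ≠ ∞ ∧ ∀ g : ℝ² → ℝ≥0∞, Measurable g →
      ∫⁻ x, (∫⁻ y, coneKernel e (y - x) * g y) ^ 4 ≤ K * (∫⁻ y, g y ^ 2) ^ 2 := by
  have h_lt : max e (1 / 2) < 1 := max_lt he (by norm_num)
  have h_autocorr := lintegral_autocorrelation_coneKernel_sq_ne_top (le_max_right e _) h_lt
  have h_mass : ∫⁻ z : ℝ², coneKernel (max e (1 / 2)) z ≠ ∞ :=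
    (lintegral_coneKernel_lt_top volume h_lt).ne
  refine ⟨_, ENNReal.add_ne_top.2 ⟨ENNReal.pow_ne_top h_mass (n := 2), h_autocorr⟩,
    fun g hg => le_trans ?_
      (lintegral_lintegral_sub_mul_pow_four_le measurable_coneKernel h_autocorr hg)⟩
  gcongr with x y
  exact coneKernel_mono (le_max_left _ _)

end PlanarAutocorrelation

section ConeKernelConvolution

variable {E : Type*} [NormedAddCommGroup E] [MeasurableSpace E] [BorelSpace E]

lemma lintegral_coneKernel_mul_le_rpow_mul_rpow [SecondCountableTopology E] (μ : Measure E)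
    {e₁ e₂ a b : ℝ} (ha : 0 < a) (hb : 0 < b) (hab : a + b = 1) {g : E → ℝ≥0∞}
    (hg : Measurable g) (x : E) :
    ∫⁻ y, coneKernel (e₁ * a + e₂ * b) (y - x) * g y ∂μ ≤
      (∫⁻ y, coneKernel e₁ (y - x) * g y ∂μ) ^ a * (∫⁻ y, coneKernel e₂ (y - x) * g y ∂μ) ^ b := by
  refine le_trans (le_of_eq (lintegral_congr fun y => ?_))
    (ENNReal.lintegral_mul_norm_pow_le (by fun_prop) (by fun_prop) ha.le hb.le hab)
  calc coneKernel (e₁ * a + e₂ * b) (y - x) * g y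
      = coneKernel e₁ (y - x) ^ a * coneKernel e₂ (y - x) ^ b * (g y ^ a * g y ^ b) := by
        rw [coneKernel_rpow ha, coneKernel_rpow hb, coneKernel_mul_coneKernel,
          ← ENNReal.rpow_add_of_nonneg _ _ ha.le hb.le, hab, ENNReal.rpow_one]
    _ = _ := by
        rw [ENNReal.mul_rpow_of_nonneg _ _ ha.le, ENNReal.mul_rpow_of_nonneg _ _ hb.le,
          mul_mul_mul_comm]

lemma lintegral_coneKernel_mul_le_sqrt [SecondCountableTopology E] (μ : Measure E)
    [μ.IsAddRightInvariant] {e : ℝ} {g : E → ℝ≥0∞} (hg : Measurable g) (x : E) :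
    ∫⁻ y, coneKernel e (y - x) * g y ∂μ ≤
      ((∫⁻ z, coneKernel (e * 2) z ∂μ) * ∫⁻ y, g y ^ 2 ∂μ) ^ (1 / 2 : ℝ) := by
  refine (ENNReal.lintegral_mul_le_Lp_mul_Lq μ .two_two (by fun_prop) hg.aemeasurable).trans_eq ?_
  simp only [coneKernel_rpow two_pos]
  rw [lintegral_sub_right_eq_self (coneKernel (e * 2)),
    ENNReal.mul_rpow_of_nonneg _ _ (by norm_num)]
  simp only [ENNReal.rpow_two]

lemma lintegral_rpow_lintegral_comp_inv_smul [NormedSpace ℝ E] [FiniteDimensional ℝ E]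
    (μ : Measure E) [μ.IsAddHaarMeasure] {c τ : ℝ} (hc : 0 ≤ c) (hτ : 0 < τ) (k g : E → ℝ≥0∞) :
    ∫⁻ x, (∫⁻ y, k (τ⁻¹ • (y - x)) * g y ∂μ) ^ c ∂μ =
      (ENNReal.ofReal τ ^ Module.finrank ℝ E) ^ (c + 1) *
        ∫⁻ x, (∫⁻ y, k (y - x) * g (τ • y) ∂μ) ^ c ∂μ := by
  set R := ENNReal.ofReal τ ^ Module.finrank ℝ E with hR
  have h_inner (x : E) : ∫⁻ y, k (τ⁻¹ • (y - x)) * g y ∂μ =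
      R * ∫⁻ u, k (u - τ⁻¹ • x) * g (τ • u) ∂μ := by
    rw [hR, ← lintegral_comp_inv_smul μ hτ]
    simp only [smul_inv_smul₀ hτ.ne', smul_sub]
  calc ∫⁻ x, (∫⁻ y, k (τ⁻¹ • (y - x)) * g y ∂μ) ^ c ∂μ
      = ∫⁻ x, R ^ c * (∫⁻ u, k (u - τ⁻¹ • x) * g (τ • u) ∂μ) ^ c ∂μ := by
        simp only [h_inner, ENNReal.mul_rpow_of_nonneg _ _ hc]
    _ = R ^ c * (R * ∫⁻ x, (∫⁻ u, k (u - x) * g (τ • u) ∂μ) ^ c ∂μ) := by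
        rw [lintegral_const_mul' _ _ (by rw [hR]; finiteness),
          lintegral_comp_inv_smul μ hτ fun x => (∫⁻ u, k (u - x) * g (τ • u) ∂μ) ^ c]
    _ = _ := by
        rw [← mul_assoc, ENNReal.rpow_add_of_nonneg _ _ hc zero_le_one, ENNReal.rpow_one]

local notation "ℝ²" => EuclideanSpace ℝ (Fin 2)

variable {c e : ℝ}

/-- Writing `e` as an interpolate of `e₁ < 1` and `e₂ < 1/2`, this interpolates between the `L⁴`
bound for `e₁` and the `L^∞` bound for `e₂` given by the Cauchy–Schwarz inequality. -/
lemma exists_lintegral_coneKernel_mul_rpow_le (hc : 4 < c) (he : e < 1 / 2 + 2 / c) :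
    ∃ K : ℝ≥0∞, K ≠ ∞ ∧ ∀ g : ℝ² → ℝ≥0∞, Measurable g →
      ∫⁻ x, (∫⁻ y, coneKernel e (y - x) * g y) ^ c ≤ K * (∫⁻ y, g y ^ 2) ^ (c / 2) := by
  have hc_pos : 0 < c := by linarith
  have ha : 0 < 4 / c := by positivity
  have hb : 0 < 1 - 4 / c := by rw [sub_pos, div_lt_one hc_pos]; exact hc
  obtain ⟨δ, hδ, rfl⟩ : ∃ δ > 0, e = (1 - δ) * (4 / c) + (1 / 2 - δ) * (1 - 4 / c) :=
    ⟨1 / 2 + 2 / c - e, by linarith, by ring⟩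
  obtain ⟨K, hK, h_four⟩ := exists_lintegral_coneKernel_mul_pow_four_le (e := 1 - δ) (by linarith)
  set M := ∫⁻ z : ℝ², coneKernel ((1 / 2 - δ) * 2) z
  have hM : M ≠ ∞ := (lintegral_coneKernel_lt_top volume (by linarith)).ne
  refine ⟨K * M ^ ((c - 4) / 2), by finiteness [show 0 ≤ (c - 4) / 2 by linarith], fun g hg => ?_⟩
  set G := ∫⁻ y, g y ^ 2
  have h_pointwise (x : ℝ²) :
      (∫⁻ y, coneKernel ((1 - δ) * (4 / c) + (1 / 2 - δ) * (1 - 4 / c)) (y - x) * g y) ^ c ≤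
        (∫⁻ y, coneKernel (1 - δ) (y - x) * g y) ^ 4 * (M * G) ^ ((c - 4) / 2) := by
    calc _ ≤ ((∫⁻ y, coneKernel (1 - δ) (y - x) * g y) ^ (4 / c) *
          ((M * G) ^ (1 / 2 : ℝ)) ^ (1 - 4 / c)) ^ c := by
          gcongr
          refine (lintegral_coneKernel_mul_le_rpow_mul_rpow volume ha hb (by ring) hg x).trans ?_
          gcongr
          exact lintegral_coneKernel_mul_le_sqrt volume hg x
      _ = _ := by
          rw [ENNReal.mul_rpow_of_nonneg _ _ hc_pos.le, ← ENNReal.rpow_mul, ← ENNReal.rpow_mul,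
            ← ENNReal.rpow_mul, ← ENNReal.rpow_natCast]
          congr 2
          · field_simp; norm_num
          · field_simp
  calc _ ≤ (∫⁻ x, (∫⁻ y, coneKernel (1 - δ) (y - x) * g y) ^ 4) * (M * G) ^ ((c - 4) / 2) := by
        rw [← lintegral_mul_const _ (by fun_prop)]
        exact lintegral_mono h_pointwise
    _ ≤ K * G ^ 2 * (M ^ ((c - 4) / 2) * G ^ ((c - 4) / 2)) := by
        rw [ENNReal.mul_rpow_of_nonneg _ _ (by linarith)]
        gcongr
        exact h_four g hg
    _ = K * M ^ ((c - 4) / 2) * G ^ (c / 2) := by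
        rw [show c / 2 = 2 + (c - 4) / 2 by ring,
          ENNReal.rpow_add_of_nonneg _ _ zero_le_two (by linarith), ENNReal.rpow_two]
        ring

lemma exists_lintegral_coneKernel_smul_mul_rpow_le (hc : 4 < c) (he : e < 1 / 2 + 2 / c) :
    ∃ K : ℝ≥0∞, K ≠ ∞ ∧ ∀ τ : ℝ, 0 < τ → ∀ g : ℝ² → ℝ≥0∞, Measurable g →
      ∫⁻ x, (∫⁻ y, coneKernel e (τ⁻¹ • (y - x)) * g y) ^ c ≤
        K * ENNReal.ofReal τ ^ (c + 2) * (∫⁻ y, g y ^ 2) ^ (c / 2) := by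
  obtain ⟨K, hK, h_unit⟩ := exists_lintegral_coneKernel_mul_rpow_le hc he
  refine ⟨K, hK, fun τ hτ g hg => ?_⟩
  have h_ne_zero : ENNReal.ofReal τ ≠ 0 := by simpa using hτ
  set R := ENNReal.ofReal τ
  set G := ∫⁻ u, g (τ • u) ^ 2
  have h_scale : ∫⁻ y, g y ^ 2 = R ^ 2 * G := by
    have := lintegral_comp_inv_smul (volume : Measure ℝ²) hτ fun u => g (τ • u) ^ 2
    simpa only [smul_inv_smul₀ hτ.ne', finrank_euclideanSpace_fin] using this
  have h_power : (R ^ 2) ^ (c + 1) = R ^ (c + 2) * (R ^ 2) ^ (c / 2) := by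
    rw [← ENNReal.rpow_two, ← ENNReal.rpow_mul, ← ENNReal.rpow_mul,
      ← ENNReal.rpow_add _ _ h_ne_zero (by finiteness)]
    congr 1; ring
  calc _ = (R ^ 2) ^ (c + 1) * ∫⁻ x, (∫⁻ y, coneKernel e (y - x) * g (τ • y)) ^ c := by
        rw [lintegral_rpow_lintegral_comp_inv_smul volume (by linarith) hτ,
          finrank_euclideanSpace_fin]
    _ ≤ (R ^ 2) ^ (c + 1) * (K * G ^ (c / 2)) := by
        gcongr
        exact h_unit _ (by fun_prop)
    _ = K * R ^ (c + 2) * (R ^ 2 * G) ^ (c / 2) := by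
        rw [h_power, ENNReal.mul_rpow_of_nonneg _ _ (by linarith)]
        ring
    _ = _ := by rw [h_scale]

end ConeKernelConvolution

section Momentum

local notation "ℝ²" => EuclideanSpace ℝ (Fin 2)

lemma pZero_pos (p : ℝ²) : 0 < pZero p := Real.sqrt_pos.2 (by positivity)

lemma pZero_sq (p : ℝ²) : pZero p ^ 2 = 1 + ‖p‖ ^ 2 := Real.sq_sqrt (by positivity)

lemma pZero_sq_euclideanPlane (p : ℝ²) : pZero p ^ 2 = 1 + (p 0 ^ 2 + p 1 ^ 2) := by
  rw [pZero_sq, norm_sq_euclideanPlane]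

@[fun_prop]
lemma measurable_pZero : Measurable pZero := by unfold pZero; fun_prop

@[fun_prop]
lemma measurable_pHat : Measurable pHat := by unfold pHat; fun_prop

lemma inner_pHat (p ξ : ℝ²) : ⟪pHat p, ξ⟫ = ⟪p, ξ⟫ / pZero p := by
  rw [pHat, real_inner_smul_left, div_eq_inv_mul]

lemma abs_apply_zero_le_pZero (p : ℝ²) : |p 0| ≤ pZero p :=
  abs_le_of_sq_le_sq (by nlinarith [pZero_sq_euclideanPlane p, sq_nonneg (p 1)]) (pZero_pos p).le

lemma one_sub_sq_div_two_le {ρ : ℝ} (hρ : 0 ≤ ρ) (p : ℝ²) :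
    (1 - ρ ^ 2) / 2 ≤ 1 + p 0 * ρ / pZero p := by
  have h_ratio : -1 ≤ p 0 / pZero p :=
    (le_div_iff₀ (pZero_pos p)).2 (by linarith [neg_le_of_abs_le (abs_apply_zero_le_pZero p)])
  have : -ρ ≤ p 0 * ρ / pZero p := by
    rw [mul_div_right_comm]
    nlinarith
  nlinarith [sq_nonneg (1 - ρ)]

lemma one_add_sq_div_le {ρ : ℝ} (hρ : 0 ≤ ρ) (hρ' : ρ ≤ 1) (p : ℝ²) :
    (1 + p 1 ^ 2) / (2 * pZero p ^ 2) ≤ 1 + p 0 * ρ / pZero p := by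
  have h_pos := pZero_pos p
  have h_abs := abs_apply_zero_le_pZero p
  set P := pZero p
  have h_factor : 1 + p 1 ^ 2 = (P - |p 0|) * (P + |p 0|) := by
    linear_combination -pZero_sq_euclideanPlane p + sq_abs (p 0)
  have h_gap : P - |p 0| ≤ P + p 0 * ρ := by
    nlinarith [neg_abs_le (p 0), abs_nonneg (p 0)]
  calc (1 + p 1 ^ 2) / (2 * P ^ 2) ≤ (P + p 0 * ρ) * (2 * P) / (2 * P ^ 2) := by
        rw [h_factor]
        have : 0 ≤ P - |p 0| := sub_nonneg.2 h_abs
        gcongr ?_ * ?_ / _ <;> linarith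
    _ = 1 + p 0 * ρ / P := by field_simp

lemma lintegral_one_add_sq_rpow_lt_top {r : ℝ} (hr : 1 < r) :
    ∫⁻ x : ℝ, ENNReal.ofReal ((1 + x ^ 2) ^ (-r / 2)) < ∞ := by
  simpa using (integrable_rpow_neg_one_add_norm_sq (E := ℝ) (μ := volume) (r := r)
    (by simpa using hr)).lintegral_lt_top

/-- The weight is split between the two lower bounds for `1 + p̂·ξ`: the first produces the
singularity in `ξ`, the second the decay in the component of `p` orthogonal to `ξ`. -/
lemma pZero_rpow_mul_rpow_le {r r' s ρ : ℝ} (hr : 0 ≤ r) (hr' : 0 ≤ r') (hs : 0 ≤ s) (hρ : 0 ≤ ρ)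
    (hρ' : ρ < 1) (p : ℝ²) :
    pZero p ^ (-(r' + r)) * (1 + p 0 * ρ / pZero p) ^ (-(s + r / 2)) ≤
      2 ^ (s + r / 2) * (1 - ρ ^ 2) ^ (-s) *
        ((1 + p 0 ^ 2) ^ (-r' / 2) * (1 + p 1 ^ 2) ^ (-r / 2)) := by
  have h_pos := pZero_pos p
  have h_sub : 0 < 1 - ρ ^ 2 := by nlinarith
  have h_first := one_sub_sq_div_two_le hρ p
  have h_second := one_add_sq_div_le hρ hρ'.le p
  have h_sq := pZero_sq_euclideanPlane p
  set P := pZero p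
  set X := 1 + p 0 * ρ / P
  have hX : 0 < X := lt_of_lt_of_le (by positivity) h_first
  have h_split : X ^ (-(s + r / 2)) ≤
      ((1 - ρ ^ 2) / 2) ^ (-s) * ((1 + p 1 ^ 2) / (2 * P ^ 2)) ^ (-r / 2) := by
    rw [show -(s + r / 2) = -s + -r / 2 by ring, Real.rpow_add hX]
    gcongr ?_ * ?_
    · exact Real.rpow_le_rpow_of_nonpos (by positivity) h_first (by linarith)
    · exact Real.rpow_le_rpow_of_nonpos (by positivity) h_second (by linarith)
  have h_half (a : ℝ) : (P ^ 2) ^ (-a / 2) = P ^ (-a) := by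
    rw [← Real.rpow_natCast, ← Real.rpow_mul h_pos.le, Nat.cast_ofNat,
      mul_div_cancel₀ _ two_ne_zero]
  have h_decay : P ^ (-r') ≤ (1 + p 0 ^ 2) ^ (-r' / 2) := by
    rw [← h_half]
    exact Real.rpow_le_rpow_of_nonpos (by positivity)
      (by linarith [sq_nonneg (p 1)]) (by linarith)
  calc P ^ (-(r' + r)) * X ^ (-(s + r / 2))
      ≤ P ^ (-(r' + r)) *
          (((1 - ρ ^ 2) / 2) ^ (-s) * ((1 + p 1 ^ 2) / (2 * P ^ 2)) ^ (-r / 2)) := by gcongr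
    _ = 2 ^ (s + r / 2) * (1 - ρ ^ 2) ^ (-s) * (P ^ (-r') * (1 + p 1 ^ 2) ^ (-r / 2)) := by
        rw [Real.div_rpow h_sub.le two_pos.le, Real.div_rpow (by positivity) (by positivity),
          Real.mul_rpow two_pos.le (by positivity), h_half r, Real.rpow_neg two_pos.le s,
          neg_div, Real.rpow_neg two_pos.le (r / 2), neg_add, Real.rpow_add h_pos,
          Real.rpow_add two_pos]
        field_simp
    _ ≤ _ := by gcongr

lemma exists_lintegral_pZero_rpow_mul_rpow_le {r r' s : ℝ} (hr : 1 < r) (hr' : 1 < r')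
    (hs : 0 ≤ s) :
    ∃ K : ℝ≥0∞, K ≠ ∞ ∧ ∀ ξ : ℝ², ‖ξ‖ < 1 →
      ∫⁻ p, ENNReal.ofReal (pZero p ^ (-(r' + r)) * (1 + ⟪pHat p, ξ⟫) ^ (-(s + r / 2))) ≤
        K * ENNReal.ofReal (1 - ‖ξ‖ ^ 2) ^ (-s) := by
  set J : ℝ → ℝ≥0∞ := fun r => ∫⁻ x : ℝ, ENNReal.ofReal ((1 + x ^ 2) ^ (-r / 2))
  have hJ_r : J r ≠ ∞ := (lintegral_one_add_sq_rpow_lt_top hr).ne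
  have hJ_r' : J r' ≠ ∞ := (lintegral_one_add_sq_rpow_lt_top hr').ne
  refine ⟨ENNReal.ofReal (2 ^ (s + r / 2)) * (J r' * J r), by finiteness, fun ξ hξ => ?_⟩
  obtain ⟨U, hU⟩ := exists_linearIsometryEquiv_inner_eq ξ
  have h_sub : 0 < 1 - ‖ξ‖ ^ 2 := by nlinarith [norm_nonneg ξ]
  set A := 2 ^ (s + r / 2) * (1 - ‖ξ‖ ^ 2) ^ (-s) with hA
  have hA_nonneg : 0 ≤ A := by positivity
  have h_nonneg (a x : ℝ) : 0 ≤ (1 + x ^ 2) ^ a := by positivity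
  set G : ℝ² → ℝ≥0∞ := fun q =>
    ENNReal.ofReal (A * ((1 + q 0 ^ 2) ^ (-r' / 2) * (1 + q 1 ^ 2) ^ (-r / 2)))
  have h_pointwise (p : ℝ²) : ENNReal.ofReal
      (pZero p ^ (-(r' + r)) * (1 + ⟪pHat p, ξ⟫) ^ (-(s + r / 2))) ≤ G (U p) := by
    rw [inner_pHat, hU, show pZero p = pZero (U p) by simp [pZero]]
    exact ENNReal.ofReal_le_ofReal (pZero_rpow_mul_rpow_le (by linarith) (by linarith) hs
      (norm_nonneg ξ) hξ (U p))
  calc _ ≤ ∫⁻ q, G q := (lintegral_mono h_pointwise).trans_eq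
        (lintegral_comp_linearIsometryEquiv U G)
    _ = ENNReal.ofReal A * (J r' * J r) := by
        rw [lintegral_euclideanPlane (by fun_prop)]
        simp only [J, G, ENNReal.ofReal_mul hA_nonneg, ENNReal.ofReal_mul (h_nonneg _ _)]
        simp_rw [Matrix.cons_val_zero, Matrix.cons_val_one, Matrix.cons_val_fin_one]
        simp_rw [lintegral_const_mul' _ _ ENNReal.ofReal_ne_top]
        rw [lintegral_mul_const _ (by fun_prop)]
    _ = _ := by
        rw [hA, ENNReal.ofReal_mul (by positivity), ENNReal.ofReal_rpow_of_pos h_sub]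
        ring

end Momentum

section PhaseSpaceDensity

local notation "ℝ²" => EuclideanSpace ℝ (Fin 2)

lemma one_add_inner_pHat_pos (p : ℝ²) {ξ : ℝ²} (hξ : ‖ξ‖ < 1) : 0 < 1 + ⟪pHat p, ξ⟫ := by
  have h_norm : ‖p‖ ≤ pZero p := Real.le_sqrt_of_sq_le (by linarith)
  have h_inner : |⟪p, ξ⟫| < pZero p := by
    have := abs_real_inner_le_norm p ξ
    nlinarith [norm_nonneg ξ, pZero_pos p]
  rw [inner_pHat, one_add_div (pZero_pos p).ne']
  exact div_pos (by linarith [neg_lt_of_abs_lt h_inner]) (pZero_pos p)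

lemma lintegral_mul_pZero_rpow_half_sq_le {F : ℝ² → ℝ} {C₀ : ℝ} (hF_nonneg : ∀ p, 0 ≤ F p)
    (hF_le : ∀ᵐ p, F p ≤ C₀) (m : ℝ) :
    ∫⁻ p, ENNReal.ofReal (F p * pZero p ^ (m / 2)) ^ (2 : ℝ) ≤
      ENNReal.ofReal C₀ * ∫⁻ p, ENNReal.ofReal (F p * pZero p ^ m) := by
  rw [← lintegral_const_mul' _ _ ENNReal.ofReal_ne_top]
  refine lintegral_mono_ae (hF_le.mono fun p hp => ?_)
  have h_pos := pZero_pos p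
  have h_nonneg := hF_nonneg p
  rw [ENNReal.ofReal_rpow_of_nonneg (by positivity) two_pos.le,
    ← ENNReal.ofReal_mul (h_nonneg.trans hp), Real.mul_rpow h_nonneg (by positivity),
    ← Real.rpow_mul h_pos.le, div_mul_cancel₀ _ two_ne_zero, Real.rpow_two, sq, mul_assoc]
  gcongr

lemma div_pZero_mul_eq (a b m : ℝ) (p : ℝ²) :
    a / (pZero p * b) = pZero p ^ (-(m + 2) / 2) * b⁻¹ * (a * pZero p ^ (m / 2)) := by
  have : pZero p ^ (-(m + 2) / 2) * pZero p ^ (m / 2) = (pZero p)⁻¹ := by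
    rw [← Real.rpow_add (pZero_pos p), ← Real.rpow_neg_one]
    ring_nf
  rw [div_eq_mul_inv, mul_inv, ← this]
  ring

lemma exists_lintegral_div_le_rpow_half {C₀ σ m : ℝ} (hσ : 0 ≤ σ) (hσ' : σ < 3 / 4)
    (hm : 3 - 4 * σ < m) :
    ∃ K : ℝ≥0∞, K ≠ ∞ ∧ ∀ F : ℝ² → ℝ, Measurable F → (∀ p, 0 ≤ F p) → (∀ᵐ p, F p ≤ C₀) →
      ∀ ξ : ℝ², ‖ξ‖ < 1 →
        ∫⁻ p, ENNReal.ofReal (F p / (pZero p * (1 + ⟪pHat p, ξ⟫))) ≤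
          K * ENNReal.ofReal (1 - ‖ξ‖ ^ 2) ^ (-σ) *
            (∫⁻ p, ENNReal.ofReal (F p * pZero p ^ m)) ^ (1 / 2 : ℝ) := by
  obtain ⟨K, hK, hK_le⟩ := exists_lintegral_pZero_rpow_mul_rpow_le (r := 4 - 4 * σ)
    (r' := m - 2 + 4 * σ) (s := 2 * σ) (by linarith) (by linarith) (by linarith)
  refine ⟨(K * ENNReal.ofReal C₀) ^ (1 / 2 : ℝ), by finiteness, fun F hF hF_nonneg hF_le ξ hξ => ?_⟩
  have hX (p : ℝ²) := one_add_inner_pHat_pos p hξ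
  set φ : ℝ² → ℝ := fun p => pZero p ^ (-(m + 2) / 2) * (1 + ⟪pHat p, ξ⟫)⁻¹
  set ψ : ℝ² → ℝ := fun p => F p * pZero p ^ (m / 2)
  have h_split (p : ℝ²) : ENNReal.ofReal (F p / (pZero p * (1 + ⟪pHat p, ξ⟫))) =
      ENNReal.ofReal (φ p) * ENNReal.ofReal (ψ p) := by
    have := pZero_pos p
    have := hX p
    rw [← ENNReal.ofReal_mul (by positivity), div_pZero_mul_eq]
  have hφ : ∫⁻ p, ENNReal.ofReal (φ p) ^ (2 : ℝ) ≤
      K * ENNReal.ofReal (1 - ‖ξ‖ ^ 2) ^ (-(2 * σ)) := by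
    refine le_of_eq_of_le (lintegral_congr fun p => ?_) (hK_le ξ hξ)
    have h_pos := pZero_pos p
    rw [ENNReal.ofReal_rpow_of_nonneg (by have := hX p; positivity) two_pos.le,
      Real.mul_rpow (by positivity) (by have := hX p; positivity), ← Real.rpow_mul h_pos.le,
      ← Real.rpow_neg_one (1 + _), ← Real.rpow_mul (hX p).le]
    ring_nf
  calc ∫⁻ p, ENNReal.ofReal (F p / (pZero p * (1 + ⟪pHat p, ξ⟫)))
      = ∫⁻ p, ENNReal.ofReal (φ p) * ENNReal.ofReal (ψ p) := lintegral_congr h_split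
    _ ≤ (∫⁻ p, ENNReal.ofReal (φ p) ^ (2 : ℝ)) ^ (1 / 2 : ℝ) *
          (∫⁻ p, ENNReal.ofReal (ψ p) ^ (2 : ℝ)) ^ (1 / 2 : ℝ) :=
        ENNReal.lintegral_mul_le_Lp_mul_Lq _ .two_two (by fun_prop) (by fun_prop)
    _ ≤ (K * ENNReal.ofReal (1 - ‖ξ‖ ^ 2) ^ (-(2 * σ))) ^ (1 / 2 : ℝ) *
          (ENNReal.ofReal C₀ * ∫⁻ p, ENNReal.ofReal (F p * pZero p ^ m)) ^ (1 / 2 : ℝ) := by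
        gcongr
        exact lintegral_mul_pZero_rpow_half_sq_le hF_nonneg hF_le m
    _ = _ := by
        simp only [ENNReal.mul_rpow_of_nonneg _ _ (one_half_pos (α := ℝ)).le, ← ENNReal.rpow_mul]
        rw [show -(2 * σ) * (1 / 2) = -σ by ring]
        ring

/-- A measurable phase-space density `0 ≤ f ≤ C₀`, the upper bound holding almost everywhere. -/
structure IsBoundedDensity (f : ℝ → ℝ² → ℝ² → ℝ) (C₀ : ℝ) : Prop where
  measurable : Measurable fun z : ℝ × ℝ² × ℝ² => f z.1 z.2.1 z.2.2
  nonneg : ∀ t x p, 0 ≤ f t x p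
  ae_le : ∀ᵐ z : ℝ × ℝ² × ℝ², f z.1 z.2.1 z.2.2 ≤ C₀

/-- The momentum average `∫ f(t,x,p) p₀^m dp`, whose spatial integral is `momentN f m t`. -/
noncomputable def momentDensity (f : ℝ → ℝ² → ℝ² → ℝ) (m t : ℝ) (x : ℝ²) : ℝ≥0∞ :=
  ∫⁻ p, ENNReal.ofReal (f t x p * pZero p ^ m)

variable {f : ℝ → ℝ² → ℝ² → ℝ} {C₀ : ℝ}

lemma measurable_momentDensity (hf : Measurable fun z : ℝ × ℝ² × ℝ² => f z.1 z.2.1 z.2.2)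
    (m : ℝ) : Measurable fun z : ℝ × ℝ² => momentDensity f m z.1 z.2 := by
  have : Measurable fun z : (ℝ × ℝ²) × ℝ² => f z.1.1 z.1.2 z.2 :=
    hf.comp (f := fun z : (ℝ × ℝ²) × ℝ² => (z.1.1, z.1.2, z.2)) (by fun_prop)
  exact Measurable.lintegral_prod_right'
    (f := fun z : (ℝ × ℝ²) × ℝ² => ENNReal.ofReal (f z.1.1 z.1.2 z.2 * pZero z.2 ^ m)) (by fun_prop)

lemma measurable_momentN (hf : Measurable fun z : ℝ × ℝ² × ℝ² => f z.1 z.2.1 z.2.2) (m : ℝ) :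
    Measurable (momentN f m) :=
  (measurable_momentDensity hf m).lintegral_prod_right'

lemma momentN_one (f : ℝ → ℝ² → ℝ² → ℝ) (t : ℝ) :
    momentN f 1 t = ∫⁻ x, ∫⁻ p, ENNReal.ofReal (pZero p * f t x p) := by
  simp only [momentN, Real.rpow_one, mul_comm]

lemma momentN_le_rpow_mul_rpow (hf : IsBoundedDensity f C₀) {l : ℝ} (hl : 0 ≤ l) (hl' : l ≤ 1)
    (a b t : ℝ) :
    momentN f ((1 - l) * a + l * b) t ≤ momentN f a t ^ (1 - l) * momentN f b t ^ l := by
  have h_meas : Measurable fun z : ℝ² × ℝ² => f t z.1 z.2 :=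
    hf.measurable.comp measurable_prodMk_left
  have h_prod (m : ℝ) : momentN f m t =
      ∫⁻ z : ℝ² × ℝ², ENNReal.ofReal (f t z.1 z.2 * pZero z.2 ^ m) :=
    (lintegral_prod (fun z : ℝ² × ℝ² => ENNReal.ofReal (f t z.1 z.2 * pZero z.2 ^ m))
      (by fun_prop)).symm
  simp only [h_prod]
  refine le_of_eq_of_le (lintegral_congr fun ⟨x, p⟩ => ?_)
    (ENNReal.lintegral_mul_norm_pow_le (by fun_prop) (by fun_prop) (sub_nonneg.2 hl') hl (by ring))
  have h_pos := pZero_pos p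
  have h_nonneg := hf.nonneg t x p
  rw [ENNReal.ofReal_rpow_of_nonneg (by positivity) (sub_nonneg.2 hl'),
    ENNReal.ofReal_rpow_of_nonneg (by positivity) hl, ← ENNReal.ofReal_mul (by positivity),
    Real.mul_rpow h_nonneg (by positivity), Real.mul_rpow h_nonneg (by positivity),
    ← Real.rpow_mul h_pos.le, ← Real.rpow_mul h_pos.le, mul_mul_mul_comm,
    ← Real.rpow_add h_pos, ← Real.rpow_add_of_nonneg h_nonneg (sub_nonneg.2 hl') hl,
    sub_add_cancel, Real.rpow_one, mul_comm a, mul_comm b]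

end PhaseSpaceDensity

section RetardedIntegral

local notation "ℝ²" => EuclideanSpace ℝ (Fin 2)

variable {f : ℝ → ℝ² → ℝ² → ℝ} {C₀ : ℝ}

lemma ofReal_div_mul_sqrt_eq_mul_coneKernel {τ : ℝ} (hτ : 0 < τ) (x y : ℝ²) (a b : ℝ) :
    ENNReal.ofReal (a / (b * τ * √(τ ^ 2 - dist y x ^ 2))) =
      ENNReal.ofReal τ ^ (-2 : ℝ) * coneKernel (1 / 2) (τ⁻¹ • (y - x)) *
        ENNReal.ofReal (a / b) := by
  set ξ := τ⁻¹ • (y - x) with hξ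
  have h_dist : dist y x = τ * ‖ξ‖ := by
    rw [hξ, norm_smul, norm_inv, Real.norm_of_nonneg hτ.le, dist_eq_norm,
      mul_inv_cancel_left₀ hτ.ne']
  have h_sqrt : √(τ ^ 2 - dist y x ^ 2) = τ * √(1 - ‖ξ‖ ^ 2) := by
    rw [h_dist, mul_pow, ← mul_one_sub, Real.sqrt_mul (sq_nonneg τ), Real.sqrt_sq hτ.le]
  rw [h_sqrt]
  rcases lt_or_ge ‖ξ‖ 1 with h_lt | h_ge
  · have h_sub : 0 < 1 - ‖ξ‖ ^ 2 := by nlinarith [norm_nonneg ξ]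
    rw [coneKernel_of_norm_lt_one h_lt, ENNReal.ofReal_rpow_of_pos hτ,
      ENNReal.ofReal_rpow_of_pos h_sub, ← ENNReal.ofReal_mul (by positivity),
      ← ENNReal.ofReal_mul (by positivity), Real.rpow_neg hτ.le, Real.rpow_neg h_sub.le,
      ← Real.sqrt_eq_rpow, Real.rpow_two]
    congr 1
    field_simp
  · rw [coneKernel_of_one_le_norm h_ge, Real.sqrt_eq_zero_of_nonpos (by nlinarith)]
    simp

lemma WT_le_lintegral_coneKernel (f : ℝ → ℝ² → ℝ² → ℝ) (t : ℝ) (x : ℝ²) :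
    WT f t x ≤ ∫⁻ s in Ioo 0 t, ∫⁻ y, ENNReal.ofReal (t - s) ^ (-2 : ℝ) *
      coneKernel (1 / 2) ((t - s)⁻¹ • (y - x)) *
        ∫⁻ p, ENNReal.ofReal (f s y p / (pZero p * (1 + ⟪pHat p, (t - s)⁻¹ • (y - x)⟫))) := by
  rw [WT, ← restrict_Ioo_eq_restrict_Ioc]
  refine setLIntegral_mono' measurableSet_Ioo fun s hs => ?_
  refine (setLIntegral_le_lintegral _ _).trans_eq (lintegral_congr fun y => ?_)
  have hτ : 0 < t - s := sub_pos.2 hs.2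
  simp_rw [ofReal_div_mul_sqrt_eq_mul_coneKernel hτ]
  exact lintegral_const_mul' _ _
    (ENNReal.mul_ne_top (by finiteness [ENNReal.ofReal_pos.2 hτ]) coneKernel_ne_top)

lemma exists_WT_le {C₀ σ m : ℝ} (hσ : 0 ≤ σ) (hσ' : σ < 3 / 4) (hm : 3 - 4 * σ < m) :
    ∃ K : ℝ≥0∞, K ≠ ∞ ∧ ∀ f : ℝ → ℝ² → ℝ² → ℝ, IsBoundedDensity f C₀ → ∀ t x,
      WT f t x ≤ ∫⁻ s in Ioo 0 t, K * ENNReal.ofReal (t - s) ^ (-2 : ℝ) *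
        ∫⁻ y, coneKernel (1 / 2 + σ) ((t - s)⁻¹ • (y - x)) *
          momentDensity f m s y ^ (1 / 2 : ℝ) := by
  obtain ⟨K, hK, hK_le⟩ := exists_lintegral_div_le_rpow_half (C₀ := C₀) hσ hσ' hm
  refine ⟨K, hK, fun f hf t x => (WT_le_lintegral_coneKernel f t x).trans ?_⟩
  have h_ae : ∀ᵐ s, ∀ᵐ y, ∀ᵐ p, f s y p ≤ C₀ :=
    (Measure.ae_ae_of_ae_prod hf.ae_le).mono fun s hs => Measure.ae_ae_of_ae_prod hs
  refine setLIntegral_mono_ae' measurableSet_Ioo (h_ae.mono fun s hs hst => ?_)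
  have hτ : 0 < t - s := sub_pos.2 hst.2
  rw [← lintegral_const_mul' _ _ (by finiteness [ENNReal.ofReal_pos.2 hτ])]
  refine lintegral_mono_ae (hs.mono fun y hy => ?_)
  set ξ := (t - s)⁻¹ • (y - x)
  rcases lt_or_ge ‖ξ‖ 1 with h_lt | h_ge
  · calc _ ≤ ENNReal.ofReal (t - s) ^ (-2 : ℝ) * coneKernel (1 / 2) ξ *
          (K * coneKernel σ ξ * momentDensity f m s y ^ (1 / 2 : ℝ)) := by
          gcongr
          rw [coneKernel_of_norm_lt_one h_lt]
          exact hK_le (f s y) (hf.measurable.comp (measurable_prodMk_left.comp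
            measurable_prodMk_left)) (hf.nonneg s y) hy ξ h_lt
      _ = _ := by
          rw [← coneKernel_mul_coneKernel]
          ring
  · simp [coneKernel_of_one_le_norm h_ge]

lemma lintegral_momentDensity_rpow_half_le (hf : IsBoundedDensity f C₀) {C₁ c s : ℝ} (hc : 2 ≤ c)
    (h_energy : momentN f 1 s ≤ ENNReal.ofReal C₁) :
    (∫⁻ y, (momentDensity f (3 - 6 / c) s y ^ (1 / 2 : ℝ)) ^ 2) ^ (c / 2) ≤
      ENNReal.ofReal C₁ ^ (c / 2 - 1) * momentN f (c - 2) s := by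
  have h_moment : ∫⁻ y, (momentDensity f (3 - 6 / c) s y ^ (1 / 2 : ℝ)) ^ 2 =
      momentN f ((1 - 2 / c) * 1 + 2 / c * (c - 2)) s := by
    rw [show (1 - 2 / c) * 1 + 2 / c * (c - 2) = 3 - 6 / c by field_simp; ring]
    refine lintegral_congr fun y => ?_
    rw [← ENNReal.rpow_two, ← ENNReal.rpow_mul]
    norm_num [momentDensity]
  have h_interp := momentN_le_rpow_mul_rpow hf (l := 2 / c) (by positivity)
    ((div_le_one (by linarith)).2 hc) 1 (c - 2) s
  rw [h_moment]
  calc _ ≤ (momentN f 1 s ^ (1 - 2 / c) * momentN f (c - 2) s ^ (2 / c)) ^ (c / 2) := by gcongr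
    _ = momentN f 1 s ^ (c / 2 - 1) * momentN f (c - 2) s := by
        rw [ENNReal.mul_rpow_of_nonneg _ _ (by positivity), ← ENNReal.rpow_mul, ← ENNReal.rpow_mul]
        field_simp
        rw [ENNReal.rpow_one]
    _ ≤ _ := by
        gcongr
        linarith

lemma exists_lintegral_coneKernel_momentDensity_rpow_le {C₀ C₁ c e : ℝ} (hc : 4 < c)
    (he : e < 1 / 2 + 2 / c) :
    ∃ K : ℝ≥0∞, K ≠ ∞ ∧ ∀ f : ℝ → ℝ² → ℝ² → ℝ, IsBoundedDensity f C₀ →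
      ∀ s, momentN f 1 s ≤ ENNReal.ofReal C₁ → ∀ τ, 0 < τ →
        ∫⁻ x, (ENNReal.ofReal τ ^ (-2 : ℝ) * ∫⁻ y, coneKernel e (τ⁻¹ • (y - x)) *
          momentDensity f (3 - 6 / c) s y ^ (1 / 2 : ℝ)) ^ c ≤
            (K * ENNReal.ofReal τ ^ (2 / c - 1) * momentN f (c - 2) s ^ (1 / c)) ^ c := by
  obtain ⟨K, hK, hK_le⟩ := exists_lintegral_coneKernel_smul_mul_rpow_le hc he
  have hc_pos : 0 < c := by linarith
  refine ⟨(K * ENNReal.ofReal C₁ ^ (c / 2 - 1)) ^ (1 / c), ?_, fun f hf s h_energy τ hτ => ?_⟩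
  · have : 0 ≤ c / 2 - 1 := by linarith
    finiteness
  have hτ_pos : 0 < ENNReal.ofReal τ := ENNReal.ofReal_pos.2 hτ
  have h_meas : Measurable fun y => momentDensity f (3 - 6 / c) s y ^ (1 / 2 : ℝ) :=
    ((measurable_momentDensity hf.measurable _).comp measurable_prodMk_left).pow_const _
  have h_root (a : ℝ≥0∞) : (a ^ (1 / c)) ^ c = a := by
    rw [← ENNReal.rpow_mul, one_div_mul_cancel hc_pos.ne', ENNReal.rpow_one]
  have h_power : (ENNReal.ofReal τ ^ (-2 : ℝ)) ^ c * ENNReal.ofReal τ ^ (c + 2) =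
      (ENNReal.ofReal τ ^ (2 / c - 1)) ^ c := by
    rw [← ENNReal.rpow_mul, ← ENNReal.rpow_mul, ← ENNReal.rpow_add _ _ hτ_pos.ne' (by finiteness)]
    congr 1
    field_simp
    ring
  simp only [ENNReal.mul_rpow_of_nonneg _ _ hc_pos.le, h_root]
  rw [lintegral_const_mul' _ _ (by finiteness)]
  calc _ ≤ (ENNReal.ofReal τ ^ (-2 : ℝ)) ^ c * (K * ENNReal.ofReal τ ^ (c + 2) *
        (ENNReal.ofReal C₁ ^ (c / 2 - 1) * momentN f (c - 2) s)) := by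
        gcongr
        exact (hK_le τ hτ _ h_meas).trans (by
          gcongr; exact lintegral_momentDensity_rpow_half_le hf (by linarith) h_energy)
    _ = K * ENNReal.ofReal C₁ ^ (c / 2 - 1) *
        ((ENNReal.ofReal τ ^ (-2 : ℝ)) ^ c * ENNReal.ofReal τ ^ (c + 2)) * momentN f (c - 2) s := by
        ring
    _ = _ := by rw [h_power]

end RetardedIntegral

section TimeIntegration

lemma lintegral_Ico_lintegral_Ioo_sub_mul_le {φ M : ℝ → ℝ≥0∞} (hφ : Measurable φ)
    (hM : Measurable M) (T : ℝ) :
    ∫⁻ t in Ico 0 T, ∫⁻ s in Ioo 0 t, φ (t - s) * M s ≤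
      (∫⁻ τ in Ioo 0 T, φ τ) * ∫⁻ s in Ico 0 T, M s := by
  set ψ := (Ioo 0 T).indicator φ
  set m := (Ico 0 T).indicator M
  have hψ : Measurable ψ := hφ.indicator measurableSet_Ioo
  have hm : Measurable m := hM.indicator measurableSet_Ico
  have h_extend : ∀ t ∈ Ico 0 T, ∫⁻ s in Ioo 0 t, φ (t - s) * M s ≤ ∫⁻ s, ψ (t - s) * m s := by
    refine fun t ht => (setLIntegral_mono' measurableSet_Ioo fun s hs => ?_).trans
      (setLIntegral_le_lintegral _ _)
    have h_sub : t - s ∈ Ioo 0 T := ⟨sub_pos.2 hs.2, by linarith [hs.1, ht.2]⟩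
    have h_mem : s ∈ Ico 0 T := ⟨hs.1.le, hs.2.trans ht.2⟩
    simp only [ψ, m, indicator_of_mem h_sub, indicator_of_mem h_mem, le_refl]
  calc _ ≤ ∫⁻ t, ∫⁻ s, ψ (t - s) * m s :=
        (setLIntegral_mono' measurableSet_Ico h_extend).trans (setLIntegral_le_lintegral _ _)
    _ = ∫⁻ s, (∫⁻ t, ψ (t - s)) * m s := by
        rw [lintegral_lintegral_swap (by fun_prop)]
        exact lintegral_congr fun s => lintegral_mul_const _ (by fun_prop)
    _ = (∫⁻ τ, ψ τ) * ∫⁻ s, m s := by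
        simp only [lintegral_sub_right_eq_self ψ, lintegral_const_mul _ hm]
    _ = _ := by rw [lintegral_indicator measurableSet_Ioo, lintegral_indicator measurableSet_Ico]

lemma lintegral_Ioo_rpow {r T : ℝ} (hr : -1 < r) (hT : 0 < T) :
    ∫⁻ τ in Ioo 0 T, ENNReal.ofReal τ ^ r =
      ENNReal.ofReal (ProbabilityTheory.beta (r + 1) 1) * ENNReal.ofReal T ^ (r + 1) := by
  simpa using lintegral_sub_rpow_mul_sub_rpow (b := 0) hr (by norm_num) hT

lemma lintegral_lintegral_sub_rpow_mul_rpow_le {M : ℝ → ℝ≥0∞} (hM : Measurable M) {c r T : ℝ}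
    (hc : 1 ≤ c) (hr : 0 < r) (hT : 0 < T) :
    (∫⁻ t in Ico 0 T, ∫⁻ s in Ioo 0 t, ENNReal.ofReal (t - s) ^ (r - 1) * M s ^ (1 / c)) ^ c ≤
      ENNReal.ofReal (ProbabilityTheory.beta r 1) ^ c * ENNReal.ofReal T ^ (r * c + (c - 1)) *
        ∫⁻ s in Ico 0 T, M s := by
  have hc_pos : 0 < c := by linarith
  have h_young := lintegral_Ico_lintegral_Ioo_sub_mul_le
    (φ := fun τ => ENNReal.ofReal τ ^ (r - 1)) (by fun_prop) (hM.pow_const (1 / c)) T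
  rw [lintegral_Ioo_rpow (by linarith) hT, sub_add_cancel] at h_young
  have h_jensen : (∫⁻ s in Ico 0 T, M s ^ (1 / c)) ^ c ≤
      ENNReal.ofReal T ^ (c - 1) * ∫⁻ s in Ico 0 T, M s := by
    have := lintegral_rpow_le (μ := volume.restrict (Ico 0 T))
      (hM.pow_const (1 / c)).aemeasurable hc
    simpa only [← ENNReal.rpow_mul, one_div_mul_cancel hc_pos.ne', ENNReal.rpow_one,
      Measure.restrict_apply_univ, Real.volume_Ico, sub_zero] using this
  calc _ ≤ (ENNReal.ofReal (ProbabilityTheory.beta r 1) * ENNReal.ofReal T ^ r *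
        ∫⁻ s in Ico 0 T, M s ^ (1 / c)) ^ c := by gcongr
    _ = ENNReal.ofReal (ProbabilityTheory.beta r 1) ^ c * ENNReal.ofReal T ^ (r * c) *
        (∫⁻ s in Ico 0 T, M s ^ (1 / c)) ^ c := by
        rw [ENNReal.mul_rpow_of_nonneg _ _ hc_pos.le, ENNReal.mul_rpow_of_nonneg _ _ hc_pos.le,
          ← ENNReal.rpow_mul]
    _ ≤ ENNReal.ofReal (ProbabilityTheory.beta r 1) ^ c * ENNReal.ofReal T ^ (r * c) *
        (ENNReal.ofReal T ^ (c - 1) * ∫⁻ s in Ico 0 T, M s) := by gcongr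
    _ = _ := by
        rw [ENNReal.rpow_add_of_nonneg _ _ (by positivity) (by linarith)]
        ring

lemma lintegral_le_one_add_measure_univ_mul {α : Type*} [MeasurableSpace α] {μ : Measure α}
    {M : α → ℝ≥0∞} {S : ℝ≥0∞} (hM : AEMeasurable M μ) (hMS : ∀ᵐ t ∂μ, M t ≤ S) {q a b : ℝ}
    (hq : 1 ≤ q) (ha : 0 ≤ a) (hb : 0 ≤ b) (hab : a + b = 1) :
    ∫⁻ t, M t ∂μ ≤ (1 + μ univ) * S ^ a * ((∫⁻ t, M t ^ q ∂μ) ^ (1 / q)) ^ b := by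
  have hq_pos : 0 < q := by linarith
  have h_sup : ∫⁻ t, M t ∂μ ≤ (1 + μ univ) * S := by
    calc ∫⁻ t, M t ∂μ ≤ ∫⁻ _, S ∂μ := lintegral_mono_ae hMS
      _ = μ univ * S := by rw [lintegral_const, mul_comm]
      _ ≤ _ := by gcongr; exact le_add_self
  have h_norm : ∫⁻ t, M t ∂μ ≤ (1 + μ univ) * (∫⁻ t, M t ^ q ∂μ) ^ (1 / q) := by
    have h_root : 0 ≤ (q - 1) * (1 / q) := mul_nonneg (by linarith) (by positivity)
    calc ∫⁻ t, M t ∂μ = ((∫⁻ t, M t ∂μ) ^ q) ^ (1 / q) := by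
          rw [← ENNReal.rpow_mul, mul_one_div_cancel hq_pos.ne', ENNReal.rpow_one]
      _ ≤ (μ univ ^ (q - 1) * ∫⁻ t, M t ^ q ∂μ) ^ (1 / q) := by
          gcongr
          exact lintegral_rpow_le hM hq
      _ = μ univ ^ ((q - 1) * (1 / q)) * (∫⁻ t, M t ^ q ∂μ) ^ (1 / q) := by
          rw [ENNReal.mul_rpow_of_nonneg _ _ (by positivity), ← ENNReal.rpow_mul]
      _ ≤ (1 + μ univ) ^ (1 : ℝ) * (∫⁻ t, M t ^ q ∂μ) ^ (1 / q) := by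
          gcongr ?_ * _
          refine (ENNReal.rpow_le_rpow le_add_self h_root).trans
            (ENNReal.rpow_le_rpow_of_exponent_le le_self_add ?_)
          rw [mul_one_div, div_le_one hq_pos]
          linarith
      _ = _ := by rw [ENNReal.rpow_one]
  calc ∫⁻ t, M t ∂μ = (∫⁻ t, M t ∂μ) ^ a * (∫⁻ t, M t ∂μ) ^ b := by
        rw [← ENNReal.rpow_add_of_nonneg _ _ ha hb, hab, ENNReal.rpow_one]
    _ ≤ ((1 + μ univ) * S) ^ a * ((1 + μ univ) * (∫⁻ t, M t ^ q ∂μ) ^ (1 / q)) ^ b := by gcongr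
    _ = (1 + μ univ) ^ (a + b) * S ^ a * ((∫⁻ t, M t ^ q ∂μ) ^ (1 / q)) ^ b := by
        rw [ENNReal.mul_rpow_of_nonneg _ _ ha, ENNReal.mul_rpow_of_nonneg _ _ hb,
          ENNReal.rpow_add_of_nonneg _ _ ha hb]
        ring
    _ = _ := by rw [hab, ENNReal.rpow_one]

end TimeIntegration

section MomentEstimate

local notation "ℝ²" => EuclideanSpace ℝ (Fin 2)

variable {C₀ C₁ : ℝ}

lemma measurable_lintegral_coneKernel_momentDensity {f : ℝ → ℝ² → ℝ² → ℝ}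
    (hf : IsBoundedDensity f C₀) (e m t : ℝ) :
    Measurable fun z : ℝ × ℝ² => ∫⁻ y, coneKernel e ((t - z.1)⁻¹ • (y - z.2)) *
      momentDensity f m z.1 y ^ (1 / 2 : ℝ) := by
  have h_density : Measurable fun w : (ℝ × ℝ²) × ℝ² => momentDensity f m w.1.1 w.2 :=
    (measurable_momentDensity hf.measurable m).comp
      (f := fun w : (ℝ × ℝ²) × ℝ² => (w.1.1, w.2)) (by fun_prop)
  exact Measurable.lintegral_prod_right' (f := fun w : (ℝ × ℝ²) × ℝ² =>
    coneKernel e ((t - w.1.1)⁻¹ • (w.2 - w.1.2)) * momentDensity f m w.1.1 w.2 ^ (1 / 2 : ℝ))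
    (by fun_prop)

lemma exists_lintegral_WT_rpow_le {c σ : ℝ} (hc : 4 < c) (hσ : 3 / (2 * c) < σ) (hσ' : σ < 2 / c) :
    ∃ K : ℝ≥0∞, K ≠ ∞ ∧ ∀ f : ℝ → ℝ² → ℝ² → ℝ, IsBoundedDensity f C₀ →
      ∀ t, (∀ s ∈ Ioo 0 t, momentN f 1 s ≤ ENNReal.ofReal C₁) →
        ∫⁻ x, WT f t x ^ c ≤
          (K * ∫⁻ s in Ioo 0 t,
            ENNReal.ofReal (t - s) ^ (2 / c - 1) * momentN f (c - 2) s ^ (1 / c)) ^ c := by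
  have hc_pos : 0 < c := by linarith
  have hσ_pos : 0 < σ := lt_trans (by positivity) hσ
  have h_half : 2 / c < 1 / 2 := by rw [div_lt_div_iff₀ hc_pos two_pos]; linarith
  have h_six : 6 / c = 4 * (3 / (2 * c)) := by field_simp; norm_num
  obtain ⟨K, hK, hK_le⟩ := exists_WT_le (C₀ := C₀) (σ := σ) (m := 3 - 6 / c)
    hσ_pos.le (by linarith) (by linarith)
  obtain ⟨L, hL, hL_le⟩ := exists_lintegral_coneKernel_momentDensity_rpow_le (C₀ := C₀) (C₁ := C₁)
    hc (e := 1 / 2 + σ) (by linarith)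
  refine ⟨K * L, by finiteness, fun f hf t h_energy => ?_⟩
  have h_meas := measurable_lintegral_coneKernel_momentDensity hf (1 / 2 + σ) (3 - 6 / c) t
  have h_meas' := measurable_momentN hf.measurable (c - 2)
  set F : ℝ → ℝ² → ℝ≥0∞ := fun s x => ENNReal.ofReal (t - s) ^ (-2 : ℝ) *
    ∫⁻ y, coneKernel (1 / 2 + σ) ((t - s)⁻¹ • (y - x)) *
      momentDensity f (3 - 6 / c) s y ^ (1 / 2 : ℝ)
  set A : ℝ → ℝ≥0∞ := fun s => ENNReal.ofReal (t - s) ^ (2 / c - 1) * momentN f (c - 2) s ^ (1 / c)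
  have hF : Measurable (Function.uncurry F) :=
    Measurable.mul (f := fun z : ℝ × ℝ² => ENNReal.ofReal (t - z.1) ^ (-2 : ℝ)) (by fun_prop) h_meas
  have hF_le : ∀ s ∈ Ioo 0 t, ∫⁻ x, (K * F s x) ^ c ≤ (K * L * A s) ^ c := by
    intro s hs
    have := hL_le f hf s (h_energy s hs) (t - s) (sub_pos.2 hs.2)
    simp only [ENNReal.mul_rpow_of_nonneg K _ hc_pos.le, mul_assoc K]
    rw [lintegral_const_mul' _ _ (by finiteness)]
    gcongr
    simpa only [A, mul_assoc] using this
  calc ∫⁻ x, WT f t x ^ c ≤ ∫⁻ x, (∫⁻ s in Ioo 0 t, K * F s x) ^ c := by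
        gcongr with x
        simpa only [mul_assoc] using hK_le f hf t x
    _ ≤ (∫⁻ s in Ioo 0 t, K * L * A s) ^ c :=
        lintegral_lintegral_rpow_le (hF.const_mul K) (by linarith) (by fun_prop)
          (ae_restrict_of_forall_mem measurableSet_Ioo hF_le)
    _ = _ := by rw [lintegral_const_mul _ (by fun_prop)]

lemma exists_lintegral_rpow_lintegral_WT_le {c : ℝ} (hc : 4 < c) :
    ∃ K : ℝ≥0∞, K ≠ ∞ ∧ ∀ f : ℝ → ℝ² → ℝ² → ℝ, IsBoundedDensity f C₀ → ∀ T, 0 < T →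
      (∀ t ∈ Ico 0 T, momentN f 1 t ≤ ENNReal.ofReal C₁) →
        (∫⁻ t in Ico 0 T, (∫⁻ x, WT f t x ^ c) ^ (1 / c)) ^ c ≤
          K * ENNReal.ofReal T ^ (c + 1) * ∫⁻ t in Ico 0 T, momentN f (c - 2) t := by
  have hc_pos : 0 < c := by linarith
  obtain ⟨K, hK, hK_le⟩ := exists_lintegral_WT_rpow_le (C₀ := C₀) (C₁ := C₁) (σ := 7 / (4 * c)) hc
    (by rw [div_lt_div_iff₀ (by positivity) (by positivity)]; linarith)
    (by rw [div_lt_div_iff₀ (by positivity) (by positivity)]; linarith)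
  refine ⟨K ^ c * ENNReal.ofReal (ProbabilityTheory.beta (2 / c) 1) ^ c, by finiteness,
    fun f hf T hT h_energy => ?_⟩
  have h_fixed : ∀ t ∈ Ico 0 T, (∫⁻ x, WT f t x ^ c) ^ (1 / c) ≤ K * ∫⁻ s in Ioo 0 t,
      ENNReal.ofReal (t - s) ^ (2 / c - 1) * momentN f (c - 2) s ^ (1 / c) := fun t ht => by
    rw [one_div, ENNReal.rpow_inv_le_iff hc_pos, ← one_div]
    exact hK_le f hf t fun s hs => h_energy s ⟨hs.1.le, hs.2.trans ht.2⟩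
  calc _ ≤ (∫⁻ t in Ico 0 T, K * ∫⁻ s in Ioo 0 t,
        ENNReal.ofReal (t - s) ^ (2 / c - 1) * momentN f (c - 2) s ^ (1 / c)) ^ c := by
        gcongr ?_ ^ c
        exact setLIntegral_mono' measurableSet_Ico h_fixed
    _ ≤ K ^ c * (ENNReal.ofReal (ProbabilityTheory.beta (2 / c) 1) ^ c *
        ENNReal.ofReal T ^ (2 / c * c + (c - 1)) * ∫⁻ t in Ico 0 T, momentN f (c - 2) t) := by
        rw [lintegral_const_mul' _ _ hK, ENNReal.mul_rpow_of_nonneg _ _ hc_pos.le]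
        gcongr
        exact lintegral_lintegral_sub_rpow_mul_rpow_le (measurable_momentN hf.measurable _)
          (by linarith) (by positivity) hT
    _ = _ := by
        rw [div_mul_cancel₀ _ hc_pos.ne', show 2 + (c - 1) = c + 1 by ring]
        ring

theorem KT_moment_estimate_general {N q a b : ℝ} (hN : 2 < N) (hq : 1 ≤ q) (ha : 0 ≤ a) (hb : 0 ≤ b)
    (hab : a + b = 1) :
    ∃ C : ℝ≥0, 0 < C ∧ ∃ k : ℝ, 0 ≤ k ∧ ∀ T : ℝ, 0 < T → ∀ f : ℝ → ℝ² → ℝ² → ℝ,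
      Measurable (fun z : ℝ × ℝ² × ℝ² => f z.1 z.2.1 z.2.2) → (∀ t x p, 0 ≤ f t x p) →
      (∀ᵐ z : ℝ × ℝ² × ℝ², f z.1 z.2.1 z.2.2 ≤ C₀) →
      (∀ t, 0 ≤ t → t < T →
        ∫⁻ x, ∫⁻ p, ENNReal.ofReal (pZero p * f t x p) ≤ ENNReal.ofReal C₁) →
      (∫⁻ t in Ico 0 T, (∫⁻ x, WT f t x ^ (N + 2)) ^ (1 / (N + 2))) ^ (N + 2) ≤
        C * ENNReal.ofReal (1 + T) ^ k * (⨆ t ∈ Ico 0 T, momentN f N t) ^ a *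
          ((∫⁻ t in Ico 0 T, momentN f N t ^ q) ^ (1 / q)) ^ b := by
  obtain ⟨K, hK, hK_le⟩ := exists_lintegral_rpow_lintegral_WT_le (c := N + 2) (C₀ := C₀) (C₁ := C₁)
    (by linarith)
  refine ⟨K.toNNReal + 1, by positivity, N + 4, by linarith,
    fun T hT f hf_meas hf_nonneg hf_le h_energy => ?_⟩
  have h_core := hK_le f ⟨hf_meas, hf_nonneg, hf_le⟩ T hT fun t ht =>
    (momentN_one f t).trans_le (h_energy t ht.1 ht.2)
  rw [show N + 2 + 1 = N + 3 by ring, show N + 2 - 2 = N by ring] at h_core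
  have h_time := lintegral_le_one_add_measure_univ_mul (μ := volume.restrict (Ico 0 T))
    (measurable_momentN hf_meas N).aemeasurable
    (ae_restrict_of_forall_mem measurableSet_Ico
      (le_iSup₂ (f := fun t (_ : t ∈ Ico 0 T) => momentN f N t))) hq ha hb hab
  have h_univ : 1 + volume.restrict (Ico 0 T) univ = ENNReal.ofReal (1 + T) := by
    simp [ENNReal.ofReal_add zero_le_one hT.le]
  have hK_coe : K ≤ (K.toNNReal + 1 : ℝ≥0) := by
    rw [ENNReal.coe_add, ENNReal.coe_toNNReal hK]
    exact le_self_add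
  rw [h_univ] at h_time
  calc _ ≤ (K.toNNReal + 1 : ℝ≥0) * ENNReal.ofReal (1 + T) ^ (N + 3) *
        (ENNReal.ofReal (1 + T) * (⨆ t ∈ Ico 0 T, momentN f N t) ^ a *
          ((∫⁻ t in Ico 0 T, momentN f N t ^ q) ^ (1 / q)) ^ b) := by
        refine h_core.trans (mul_le_mul' (mul_le_mul' hK_coe ?_) h_time)
        exact ENNReal.rpow_le_rpow (ENNReal.ofReal_le_ofReal (by linarith)) (by linarith)
    _ = _ := by
        rw [show N + 4 = N + 3 + 1 by ring,
          ENNReal.rpow_add_of_nonneg _ _ (by linarith) zero_le_one, ENNReal.rpow_one]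
        ring

end MomentEstimate

/-- **Moment estimate for `K_T`** (Proposition 5.5).  Let `N > 13`, `f ≤ C₀` a.e.,
with energy `sup_{t<T} ∫∫ p₀ f ≤ C₁`.  Then there are `q₂' ∈ [1,∞)` (depending only on
`N`) and `C > 0`, `k ≥ 0` (depending only on `N, C₀, C₁`, not on `T`) with
`‖W_T‖_{L¹_t([0,T);L^{N+2}_x)}^{N+2}
  ≤ C (1+T)^k ‖f p₀^N‖_{L^∞_t L¹_x L¹_p}^{(N+2)/(5(N−1))}
      ‖f p₀^N‖_{L^{q₂'}_t L¹_x L¹_p}^{(4N−7)/(5(N−1))}`. -/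
theorem KT_moment_estimate (N C₀ C₁ : ℝ) (hN : 13 < N) (hC₀ : 0 < C₀) (hC₁ : 0 < C₁) :
    ∃ q₂' : ℝ, 1 ≤ q₂' ∧
    ∃ C : ℝ≥0, 0 < C ∧ ∃ k : ℝ, 0 ≤ k ∧
      ∀ (T : ℝ), 0 < T →
      ∀ (f : ℝ → EuclideanSpace ℝ (Fin 2) → EuclideanSpace ℝ (Fin 2) → ℝ),
        Measurable (fun z : ℝ × EuclideanSpace ℝ (Fin 2) × EuclideanSpace ℝ (Fin 2) =>
          f z.1 z.2.1 z.2.2) →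
        (∀ t x p, 0 ≤ f t x p) →
        (∀ᵐ z : ℝ × EuclideanSpace ℝ (Fin 2) × EuclideanSpace ℝ (Fin 2),
          f z.1 z.2.1 z.2.2 ≤ C₀) →
        (∀ t, 0 ≤ t → t < T →
          (∫⁻ x, ∫⁻ p, ENNReal.ofReal (pZero p * f t x p)) ≤ ENNReal.ofReal C₁) →
        (∫⁻ t in Ico (0 : ℝ) T,
            (∫⁻ x, WT f t x ^ (N + 2)) ^ (1 / (N + 2))) ^ (N + 2)
          ≤ C * ENNReal.ofReal (1 + T) ^ k
            * (⨆ t ∈ Ico (0 : ℝ) T, momentN f N t) ^ ((N + 2) / (5 * (N - 1)))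
            * ((∫⁻ t in Ico (0 : ℝ) T, momentN f N t ^ q₂') ^ (1 / q₂'))
                ^ ((4 * N - 7) / (5 * (N - 1))) :=
  ⟨1, le_rfl, KT_moment_estimate_general (by linarith) le_rfl
    (div_nonneg (by linarith) (by linarith)) (div_nonneg (by linarith) (by linarith))
    (by rw [← add_div, div_eq_one_iff_eq (by linarith)]; ring)⟩
end
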